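/- Let R be a Cohen-Macaulay ring (i.e., R_p is a Cohen-Macaulay local ring for every prime p). The maps φ and ψ, defined by φ(X)(p) = ht p − min_{X∈X} depth X_p and ψ(f) = { M ∈ mod R : depth M_p ≥ ht p − f(p) for all p ∈ Spec R }, are mutually inverse bijections between the set of dominant resolving subcategories of mod R and the set of grade consistent functions on Spec R. -/

import Mathlib

universe u

open CategoryTheory

namespace ResolvPaper

variable (R : Type u) [CommRing R]

/-- `IsSES f g` means `0 → A → B → C → 0` is a short exact sequence. -/
def IsSES {R : Type u} [CommRing R] {A B C : Type u} [AddCommGroup A] [Module R A]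
    [AddCommGroup B] [Module R B] [AddCommGroup C] [Module R C]
    (f : A →ₗ[R] B) (g : B →ₗ[R] C) : Prop :=
  Function.Injective f ∧ Function.Surjective g ∧ LinearMap.range f = LinearMap.ker g

/-- A resolving subcategory of `mod R`, viewed as a set of bundled modules
closed under isomorphism, containing the finitely generated projective modules, and closed
under direct summands, extensions and syzygies. -/
structure IsResolving (𝒳 : Set (ModuleCat.{u} R)) : Prop where
  fg : ∀ M ∈ 𝒳, Module.Finite R M
  iso_closed : ∀ M N : ModuleCat.{u} R, Nonempty (M ≃ₗ[R] N) → M ∈ 𝒳 → N ∈ 𝒳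
  proj_mem : ∀ M : ModuleCat.{u} R, Module.Finite R M → Module.Projective R M → M ∈ 𝒳
  summand_closed : ∀ M N : ModuleCat.{u} R, ModuleCat.of R (↥M × ↥N) ∈ 𝒳 → M ∈ 𝒳
  ext_closed : ∀ (A B C : ModuleCat.{u} R) (f : A →ₗ[R] B) (g : B →ₗ[R] C),
    IsSES f g → A ∈ 𝒳 → C ∈ 𝒳 → B ∈ 𝒳
  syzygy_closed : ∀ (K P M : ModuleCat.{u} R) (f : K →ₗ[R] P) (g : P →ₗ[R] M),
    IsSES f g → Module.Finite R K → Module.Finite R P → Module.Projective R P →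
    M ∈ 𝒳 → K ∈ 𝒳

/-- The resolving closure: the smallest resolving subcategory containing `S`. -/
def resClosure (S : Set (ModuleCat.{u} R)) : Set (ModuleCat.{u} R) :=
  ⋂₀ {𝒳 | IsResolving R 𝒳 ∧ S ⊆ 𝒳}

/-- An extension-closed subcategory of `mod R`: closed under isomorphism,
direct summands and extensions. -/
def IsExtClosed (𝒳 : Set (ModuleCat.{u} R)) : Prop :=
  (∀ M N : ModuleCat.{u} R, Nonempty (M ≃ₗ[R] N) → M ∈ 𝒳 → N ∈ 𝒳) ∧
  (∀ M N : ModuleCat.{u} R, ModuleCat.of R (↥M × ↥N) ∈ 𝒳 → M ∈ 𝒳) ∧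
  (∀ (A B C : ModuleCat.{u} R) (f : A →ₗ[R] B) (g : B →ₗ[R] C),
    IsSES f g → A ∈ 𝒳 → C ∈ 𝒳 → B ∈ 𝒳)

/-- The extension closure of a set of modules. -/
def extClosure (S : Set (ModuleCat.{u} R)) : Set (ModuleCat.{u} R) :=
  ⋂₀ {𝒳 | IsExtClosed R 𝒳 ∧ S ⊆ 𝒳}

/-- `add R`: direct summands of finite free modules. -/
def addR : Set (ModuleCat.{u} R) :=
  {M | ∃ (n : ℕ) (N : ModuleCat.{u} R), Nonempty ((↥M × ↥N) ≃ₗ[R] (Fin n → R))}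

/-- `pdLE n M` : the projective dimension of `M` is at most `n`. -/
def pdLE : ℕ → ModuleCat.{u} R → Prop
  | 0, M => Module.Projective R M
  | n+1, M => ∃ (K P : ModuleCat.{u} R) (f : K →ₗ[R] P) (g : P →ₗ[R] M),
      Module.Finite R P ∧ Module.Projective R P ∧ IsSES f g ∧ pdLE n K

/-- The projective dimension, an element of `WithBot ℕ∞`; the zero module
has projective dimension `⊥ = -∞`. -/
noncomputable def pdim (M : ModuleCat.{u} R) : WithBot ℕ∞ :=
  sInf {x : WithBot ℕ∞ | (x = ⊥ ∧ Subsingleton M) ∨ ∃ n : ℕ, x = (n : ℕ∞) ∧ pdLE R n M}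

/-- The depth of `M` with respect to the ideal `I`: the supremum of lengths of weakly
`M`-regular sequences contained in `I`.  The zero module has depth `∞`. -/
noncomputable def depthE (I : Ideal R) (M : Type u) [AddCommGroup M] [Module R M] : ℕ∞ :=
  sSup {x : ℕ∞ | ∃ rs : List R, (∀ r ∈ rs, r ∈ I) ∧
    RingTheory.Sequence.IsWeaklyRegular M rs ∧ x = rs.length}

/-- The grade of an ideal: the length of a maximal `R`-regular sequence in `I`. -/
noncomputable def gradeE (I : Ideal R) : ℕ∞ := depthE R I R

/-- A grade consistent function on `Spec R`. -/
def GradeConsistent (f : PrimeSpectrum R → ℕ) : Prop :=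
  (∀ p : PrimeSpectrum R, (f p : ℕ∞) ≤ gradeE R p.asIdeal) ∧
  (∀ p q : PrimeSpectrum R, p.asIdeal ≤ q.asIdeal → f p ≤ f q)

/-- The localization of a module at a prime, as a module over the local ring `R_p`. -/
noncomputable abbrev localizeM (p : PrimeSpectrum R) (M : ModuleCat.{u} R) :
    ModuleCat.{u} (Localization.AtPrime p.asIdeal) :=
  ModuleCat.of (Localization.AtPrime p.asIdeal) (LocalizedModule p.asIdeal.primeCompl M)

/-- `pd_{R_p} M_p`. -/
noncomputable def localPdim (p : PrimeSpectrum R) (M : ModuleCat.{u} R) : WithBot ℕ∞ :=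
  pdim (Localization.AtPrime p.asIdeal) (localizeM R p M)

/-- `depth_{R_p} M_p`. -/
noncomputable def localDepth (p : PrimeSpectrum R) (M : ModuleCat.{u} R) : ℕ∞ :=
  depthE (Localization.AtPrime p.asIdeal)
    (IsLocalRing.maximalIdeal (Localization.AtPrime p.asIdeal))
    (LocalizedModule p.asIdeal.primeCompl M)

/-- The height of a prime ideal. -/
noncomputable def heightE (p : PrimeSpectrum R) : ℕ∞ := Order.height p

/-- `PD(R)` : finitely generated modules of finite projective dimension. -/
def PDcat : Set (ModuleCat.{u} R) :=
  {M | Module.Finite R M ∧ ∃ n : ℕ, pdLE R n M}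

/-- `MCM(R)` : maximal Cohen-Macaulay modules. -/
def MCMcat : Set (ModuleCat.{u} R) :=
  {M | Module.Finite R M ∧ ∀ p : PrimeSpectrum R, heightE R p ≤ localDepth R p M}

/-- The nonfree locus of a module. -/
def NF (M : ModuleCat.{u} R) : Set (PrimeSpectrum R) :=
  {p | ¬ Module.Free (Localization.AtPrime p.asIdeal) (LocalizedModule p.asIdeal.primeCompl M)}

/-- The infinite projective dimension locus of a module. -/
def IPD (M : ModuleCat.{u} R) : Set (PrimeSpectrum R) :=
  {p | localPdim R p M = (⊤ : WithBot ℕ∞)}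

/-- The infinite projective dimension locus of a collection of modules. -/
def IPDcat (𝒳 : Set (ModuleCat.{u} R)) : Set (PrimeSpectrum R) :=
  ⋃ M ∈ 𝒳, IPD R M

/-- The modules in `mod R` whose infinite projective dimension locus lies in `W`. -/
def IPDinv (W : Set (PrimeSpectrum R)) : Set (ModuleCat.{u} R) :=
  {M | Module.Finite R M ∧ IPD R M ⊆ W}

/-- A specialization closed subset of `Spec R`. -/
def SpecClosed (W : Set (PrimeSpectrum R)) : Prop :=
  ∀ p ∈ W, ∀ q : PrimeSpectrum R, p.asIdeal ≤ q.asIdeal → q ∈ W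

/-- Membership in `add 𝒳_p`: direct summands of localizations of finite direct sums
of members of `𝒳`. -/
def memAddLocal (𝒳 : Set (ModuleCat.{u} R)) (p : PrimeSpectrum R)
    (N : ModuleCat.{u} (Localization.AtPrime p.asIdeal)) : Prop :=
  ∃ (n : ℕ) (X : Fin n → ModuleCat.{u} R), (∀ i, X i ∈ 𝒳) ∧
    ∃ (N' : ModuleCat.{u} (Localization.AtPrime p.asIdeal)),
      Nonempty ((↥N × ↥N') ≃ₗ[Localization.AtPrime p.asIdeal]
        ((i : Fin n) → LocalizedModule p.asIdeal.primeCompl (X i)))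

/-- `K` is an `n`-th syzygy of `M` computed from a minimal free resolution over the
local ring `S`. -/
def IsMinSyz (S : Type u) [CommRing S] [IsLocalRing S] :
    ℕ → ModuleCat.{u} S → ModuleCat.{u} S → Prop
  | 0, M, K => Nonempty (K ≃ₗ[S] M)
  | n+1, M, K => ∃ (F : ModuleCat.{u} S) (g : F →ₗ[S] M) (K' : ModuleCat.{u} S)
      (i : K' →ₗ[S] F),
      Module.Finite S F ∧ Module.Free S F ∧ Function.Surjective g ∧
      (LinearMap.ker g ≤ (IsLocalRing.maximalIdeal S) • (⊤ : Submodule S F)) ∧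
      Function.Injective i ∧ LinearMap.range i = LinearMap.ker g ∧
      IsMinSyz S n K' K

/-- `K` is an `n`-th syzygy of `M` in some projective resolution (over any ring). -/
def IsSyz : ℕ → ModuleCat.{u} R → ModuleCat.{u} R → Prop
  | 0, M, K => Nonempty (K ≃ₗ[R] M)
  | n+1, M, K => ∃ (F : ModuleCat.{u} R) (g : F →ₗ[R] M) (K' : ModuleCat.{u} R)
      (i : K' →ₗ[R] F),
      Module.Finite R F ∧ Module.Projective R F ∧ Function.Surjective g ∧
      Function.Injective i ∧ LinearMap.range i = LinearMap.ker g ∧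
      IsSyz n K' K

/-- `T` is (isomorphic to) the Auslander transpose of `M`, computed from a minimal
free presentation over the local ring `S`. -/
def IsTranspose (S : Type u) [CommRing S] [IsLocalRing S] (M T : ModuleCat.{u} S) : Prop :=
  ∃ (F1 F0 : ModuleCat.{u} S) (d : F1 →ₗ[S] F0) (e : F0 →ₗ[S] M),
    Module.Finite S F0 ∧ Module.Free S F0 ∧ Module.Finite S F1 ∧ Module.Free S F1 ∧
    Function.Surjective e ∧ LinearMap.range d = LinearMap.ker e ∧
    LinearMap.ker e ≤ (IsLocalRing.maximalIdeal S) • (⊤ : Submodule S F0) ∧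
    LinearMap.ker d ≤ (IsLocalRing.maximalIdeal S) • (⊤ : Submodule S F1) ∧
    Nonempty (T ≃ₗ[S] ((Module.Dual S F1) ⧸ LinearMap.range d.dualMap))

/-- `T` is (isomorphic to) `Tr Ω^n M` over the local ring `S`. -/
def IsTrOmega (S : Type u) [CommRing S] [IsLocalRing S] (n : ℕ) (M T : ModuleCat.{u} S) :
    Prop :=
  ∃ K : ModuleCat.{u} S, IsMinSyz S n M K ∧ IsTranspose S K T

/-- Resolving subcategory `𝒳` is dominant on `W ⊆ Spec R`. -/
def DominantOn (𝒳 : Set (ModuleCat.{u} R)) (W : Set (PrimeSpectrum R)) : Prop :=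
  ∀ p ∈ W, ∃ (n : ℕ) (K : ModuleCat.{u} (Localization.AtPrime p.asIdeal)),
    IsMinSyz (Localization.AtPrime p.asIdeal) n
      (ModuleCat.of (Localization.AtPrime p.asIdeal)
        (IsLocalRing.ResidueField (Localization.AtPrime p.asIdeal))) K ∧
    memAddLocal R 𝒳 p K

/-- Dominant resolving subcategory. -/
def Dominant (𝒳 : Set (ModuleCat.{u} R)) : Prop := DominantOn R 𝒳 Set.univ

/-- A (noetherian) local ring is Cohen-Macaulay if its depth equals its Krull dimension. -/
def IsCMLocalRing (S : Type u) [CommRing S] [IsLocalRing S] : Prop :=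
  IsNoetherianRing S ∧
    ((depthE S (IsLocalRing.maximalIdeal S) S : WithBot ℕ∞) = ringKrullDim S)

/-- A regular local ring: a noetherian local ring whose maximal ideal is generated by
`dim S` elements. -/
def IsRegLocalRing (S : Type u) [CommRing S] [IsLocalRing S] : Prop :=
  IsNoetherianRing S ∧ ∃ s : Finset S,
    Ideal.span (s : Set S) = IsLocalRing.maximalIdeal S ∧
    ringKrullDim S = (s.card : WithBot ℕ∞)

/-- The singular locus of `R`. -/
def SingLocus : Set (PrimeSpectrum R) :=
  {p | ¬ IsRegLocalRing (Localization.AtPrime p.asIdeal)}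

/-- A hypersurface local ring: the completion is a quotient of a regular local ring by
one element. -/
def IsHypersurfaceLocalRing (S : Type u) [CommRing S] [IsLocalRing S] : Prop :=
  ∃ (T : Type u) (_ : CommRing T) (_ : IsLocalRing T) (f : T),
    IsRegLocalRing T ∧
    Nonempty ((AdicCompletion (IsLocalRing.maximalIdeal S) S) ≃+* (T ⧸ Ideal.span {f}))

/-- A complete intersection local ring: the completion is a quotient of a regular local
ring by a regular sequence. -/
def IsCompleteIntersectionLocalRing (S : Type u) [CommRing S] [IsLocalRing S] : Prop :=
  ∃ (T : Type u) (_ : CommRing T) (_ : IsLocalRing T) (rs : List T),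
    IsRegLocalRing T ∧ RingTheory.Sequence.IsRegular T rs ∧
    Nonempty ((AdicCompletion (IsLocalRing.maximalIdeal S) S) ≃+*
      (T ⧸ Ideal.ofList rs))

/-- The subquotient `A / (A ⊓ B)` of two submodules, used for homology. -/
def subquot {S M : Type u} [CommRing S] [AddCommGroup M] [Module S M]
    (A B : Submodule S M) : Type u :=
  A ⧸ (B.comap A.subtype)

noncomputable instance {S M : Type u} [CommRing S] [AddCommGroup M] [Module S M]
    (A B : Submodule S M) : AddCommGroup (subquot A B) :=
  inferInstanceAs (AddCommGroup (A ⧸ (B.comap A.subtype)))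

noncomputable instance {S M : Type u} [CommRing S] [AddCommGroup M] [Module S M]
    (A B : Submodule S M) : Module S (subquot A B) :=
  inferInstanceAs (Module S (A ⧸ (B.comap A.subtype)))

/-- `E` is (isomorphic to) `Ext^{j+1}_S(M, S)`, computed from a finite free resolution. -/
def IsExtPos (S : Type u) [CommRing S] (j : ℕ) (M E : ModuleCat.{u} S) : Prop :=
  ∃ (F : ℕ → ModuleCat.{u} S) (d : ∀ i : ℕ, (F (i+1) : Type u) →ₗ[S] F i)
    (e : (F 0 : Type u) →ₗ[S] M),
    (∀ i, Module.Finite S (F i)) ∧ (∀ i, Module.Free S (F i)) ∧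
    Function.Surjective e ∧ LinearMap.range (d 0) = LinearMap.ker e ∧
    (∀ i, LinearMap.range (d (i+1)) = LinearMap.ker (d i)) ∧
    Nonempty (E ≃ₗ[S]
      subquot (LinearMap.ker ((d (j+1)).dualMap)) (LinearMap.range ((d j).dualMap)))

/-- `T` is (isomorphic to) `Tor_n^S(M, N)`, computed from a projective resolution of `M`. -/
def IsTor (S : Type u) [CommRing S] (n : ℕ) (M N T : ModuleCat.{u} S) : Prop :=
  ∃ (F : ℕ → ModuleCat.{u} S) (d : ∀ i : ℕ, (F (i+1) : Type u) →ₗ[S] F i)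
    (e : (F 0 : Type u) →ₗ[S] M),
    (∀ i, Module.Projective S (F i)) ∧
    Function.Surjective e ∧ LinearMap.range (d 0) = LinearMap.ker e ∧
    (∀ i, LinearMap.range (d (i+1)) = LinearMap.ker (d i)) ∧
    (match n with
      | 0 => Nonempty (T ≃ₗ[S] TensorProduct S M N)
      | (j+1) => Nonempty (T ≃ₗ[S]
          subquot (LinearMap.ker (LinearMap.rTensor (↥N) (d j)))
            (LinearMap.range (LinearMap.rTensor (↥N) (d (j+1))))))

/-- `idLE n M` : the injective dimension of `M` is at most `n`. -/
def idLE (S : Type u) [CommRing S] : ℕ → ModuleCat.{u} S → Prop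
  | 0, M => Module.Injective S M
  | n+1, M => ∃ (I C : ModuleCat.{u} S) (f : M →ₗ[S] I) (g : I →ₗ[S] C),
      IsSES f g ∧ Module.Injective S I ∧ idLE S n C

/-- `PD_0^n(R)` over a local ring: modules of projective dimension at most `n` that are
free on the punctured spectrum. -/
def PD0n [IsLocalRing R] (n : ℕ) : Set (ModuleCat.{u} R) :=
  {M | Module.Finite R M ∧ pdLE R n M ∧
    ∀ p : PrimeSpectrum R, p.asIdeal ≠ IsLocalRing.maximalIdeal R →
      Module.Free (Localization.AtPrime p.asIdeal) (LocalizedModule p.asIdeal.primeCompl M)}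

/-- `PD_0(R)` over a local ring: modules of finite projective dimension that are
free on the punctured spectrum. -/
def PD0 [IsLocalRing R] : Set (ModuleCat.{u} R) :=
  {M | Module.Finite R M ∧ (∃ n : ℕ, pdLE R n M) ∧
    ∀ p : PrimeSpectrum R, p.asIdeal ≠ IsLocalRing.maximalIdeal R →
      Module.Free (Localization.AtPrime p.asIdeal) (LocalizedModule p.asIdeal.primeCompl M)}

/-- The residue field of a local ring, as a bundled module. -/
noncomputable abbrev residueMod (S : Type u) [CommRing S] [IsLocalRing S] : ModuleCat.{u} S :=
  ModuleCat.of S (IsLocalRing.ResidueField S)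


/-- The map `ψ` defined by depth conditions:
`ψ(f) = { M ∈ mod R | depth M_p ≥ ht p - f(p) for all p }`. -/
def psiDepth (f : PrimeSpectrum R → ℕ) : Set (ModuleCat.{u} R) :=
  {M | Module.Finite R M ∧
    ∀ p : PrimeSpectrum R, heightE R p - (f p : ℕ∞) ≤ localDepth R p M}

section PartB

set_option linter.unusedSectionVars false

variable {S : Type u} [CommRing S]
variable {A B C A' B' M N X Y F K P : Type u}
  [AddCommGroup A] [Module S A] [AddCommGroup B] [Module S B] [AddCommGroup C] [Module S C]
  [AddCommGroup A'] [Module S A'] [AddCommGroup B'] [Module S B']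
  [AddCommGroup M] [Module S M] [AddCommGroup N] [Module S N]
  [AddCommGroup X] [Module S X] [AddCommGroup Y] [Module S Y]
  [AddCommGroup F] [Module S F] [AddCommGroup K] [Module S K] [AddCommGroup P] [Module S P]

/-- unbundled membership -/
def Mem (W : Set (ModuleCat.{u} S)) (M : Type u) [AddCommGroup M] [Module S M] : Prop :=
  ModuleCat.of S M ∈ W

lemma mem_iso {W : Set (ModuleCat.{u} S)} (hW : IsResolving S W) (e : M ≃ₗ[S] N)
    (h : Mem W M) : Mem W N :=
  hW.iso_closed (ModuleCat.of S M) (ModuleCat.of S N) ⟨e⟩ h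

lemma mem_fin {W : Set (ModuleCat.{u} S)} (hW : IsResolving S W)
    (h : Mem W M) : Module.Finite S M :=
  hW.fg (ModuleCat.of S M) h

lemma mem_proj {W : Set (ModuleCat.{u} S)} (hW : IsResolving S W) (M : Type u)
    [AddCommGroup M] [Module S M]
    [h1 : Module.Finite S M] [h2 : Module.Projective S M] : Mem W M :=
  hW.proj_mem (ModuleCat.of S M) h1 h2

lemma mem_ext {W : Set (ModuleCat.{u} S)} (hW : IsResolving S W) {f : A →ₗ[S] B}
    {g : B →ₗ[S] C} (h : IsSES f g) (hA : Mem W A) (hC : Mem W C) : Mem W B :=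
  hW.ext_closed (ModuleCat.of S A) (ModuleCat.of S B) (ModuleCat.of S C) f g h hA hC

lemma ses_ker {g : B →ₗ[S] C} (h : Function.Surjective g) :
    IsSES (LinearMap.ker g).subtype g :=
  ⟨Subtype.val_injective, h, by simp⟩

lemma ses_inl : IsSES (LinearMap.inl S A B) (LinearMap.snd S A B) :=
  ⟨LinearMap.inl_injective, LinearMap.snd_surjective, LinearMap.range_inl S A B⟩

lemma IsSES.apply {f : A →ₗ[S] B} {g : B →ₗ[S] C} (h : IsSES f g) (a : A) : g (f a) = 0 := by
  have : f a ∈ LinearMap.range f := ⟨a, rfl⟩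
  rw [h.2.2] at this; exact this

lemma IsSES.lift {f : A →ₗ[S] B} {g : B →ₗ[S] C} (h : IsSES f g) (b : B) (hb : g b = 0) :
    ∃ a, f a = b := by
  have : b ∈ LinearMap.ker g := hb
  rw [← h.2.2] at this; exact this

lemma IsSES.mk' {f : A →ₗ[S] B} {g : B →ₗ[S] C} (h1 : ∀ a, f a = 0 → a = 0)
    (h2 : ∀ c, ∃ b, g b = c) (h3 : ∀ a, g (f a) = 0) (h4 : ∀ b, g b = 0 → ∃ a, f a = b) :
    IsSES f g := by
  refine ⟨(injective_iff_map_eq_zero f).2 h1, h2, ?_⟩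
  ext b
  constructor
  · rintro ⟨a, rfl⟩; exact h3 a
  · intro hb; exact h4 b hb

noncomputable def IsSES.kerEquiv {f : A →ₗ[S] B} {g : B →ₗ[S] C} (h : IsSES f g) :
    A ≃ₗ[S] LinearMap.ker g :=
  (LinearEquiv.ofInjective f h.1).trans (LinearEquiv.ofEq _ _ h.2.2)

lemma mem_prod {W : Set (ModuleCat.{u} S)} (hW : IsResolving S W) (hA : Mem W A)
    (hB : Mem W B) : Mem W (A × B) :=
  mem_ext hW ses_inl hA hB

/-- retracts -/
lemma mem_retract {W : Set (ModuleCat.{u} S)} (hW : IsResolving S W) (hX : Mem W X)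
    (b : M →ₗ[S] X) (a : X →ₗ[S] M) (h : ∀ m, a (b m) = m) : Mem W M := by
  have e : X ≃ₗ[S] (M × LinearMap.ker a) := by
    refine (LinearEquiv.ofBijective (b.coprod (LinearMap.ker a).subtype) ⟨?_, ?_⟩).symm
    · rw [injective_iff_map_eq_zero]
      rintro ⟨m, k, hk⟩ h0
      simp only [LinearMap.coprod_apply, Submodule.subtype_apply] at h0
      have h1 := congrArg a h0
      rw [map_add, h, map_zero, LinearMap.mem_ker.1 hk, add_zero] at h1
      subst h1
      simp only [map_zero, zero_add] at h0
      subst h0; rfl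
    · intro x
      refine ⟨⟨a x, ⟨x - b (a x), ?_⟩⟩, ?_⟩
      · simp [h]
      · simp
  exact hW.summand_closed (ModuleCat.of S M) (ModuleCat.of S (LinearMap.ker a)) (mem_iso hW e hX)

/-- pullback -/
def pb (g : B →ₗ[S] C) (g' : B' →ₗ[S] C) : Submodule S (B × B') :=
  LinearMap.eqLocus (g ∘ₗ LinearMap.fst S B B') (g' ∘ₗ LinearMap.snd S B B')

lemma mem_pb {g : B →ₗ[S] C} {g' : B' →ₗ[S] C} {x : B × B'} : x ∈ pb g g' ↔ g x.1 = g' x.2 :=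
  Iff.rfl

def pb1 (g : B →ₗ[S] C) (g' : B' →ₗ[S] C) : pb g g' →ₗ[S] B :=
  LinearMap.fst S B B' ∘ₗ (pb g g').subtype

def pb2 (g : B →ₗ[S] C) (g' : B' →ₗ[S] C) : pb g g' →ₗ[S] B' :=
  LinearMap.snd S B B' ∘ₗ (pb g g').subtype

lemma pb_ses1 (g : B →ₗ[S] C) {f' : A' →ₗ[S] B'} {g' : B' →ₗ[S] C} (h : IsSES f' g') :
    ∃ i : A' →ₗ[S] pb g g', (∀ a, (i a).1 = (0, f' a)) ∧ IsSES i (pb1 g g') := by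
  refine ⟨LinearMap.codRestrict _ (LinearMap.inr S B B' ∘ₗ f') ?_, ?_, ?_⟩
  · intro a; rw [mem_pb]; simp [h.apply]
  · intro a; rfl
  · refine IsSES.mk' ?_ ?_ ?_ ?_
    · intro a ha
      have := congrArg (fun z => z.1.2) ha
      exact (injective_iff_map_eq_zero f').1 h.1 a this
    · intro c
      obtain ⟨b', hb'⟩ := h.2.1 (g c)
      exact ⟨⟨(c, b'), hb'.symm⟩, rfl⟩
    · intro a; rfl
    · rintro ⟨⟨b, b'⟩, hb⟩ h0
      change b = 0 at h0
      subst h0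
      rw [mem_pb] at hb
      simp only [map_zero] at hb
      obtain ⟨a, ha⟩ := h.lift b' hb.symm
      exact ⟨a, Subtype.ext (Prod.ext rfl ha)⟩

lemma pb_ses2 {f : A →ₗ[S] B} {g : B →ₗ[S] C} (g' : B' →ₗ[S] C) (h : IsSES f g) :
    ∃ i : A →ₗ[S] pb g g', (∀ a, (i a).1 = (f a, 0)) ∧ IsSES i (pb2 g g') := by
  refine ⟨LinearMap.codRestrict _ (LinearMap.inl S B B' ∘ₗ f) ?_, ?_, ?_⟩
  · intro a; rw [mem_pb]; simp [h.apply]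
  · intro a; rfl
  · refine IsSES.mk' ?_ ?_ ?_ ?_
    · intro a ha
      have := congrArg (fun z => z.1.1) ha
      exact (injective_iff_map_eq_zero f).1 h.1 a this
    · intro c
      obtain ⟨b', hb'⟩ := h.2.1 (g' c)
      exact ⟨⟨(b', c), hb'⟩, rfl⟩
    · intro a; rfl
    · rintro ⟨⟨b, b'⟩, hb⟩ h0
      change b' = 0 at h0
      subst h0
      rw [mem_pb] at hb
      simp only [map_zero] at hb
      obtain ⟨a, ha⟩ := h.lift b hb
      exact ⟨a, Subtype.ext (Prod.ext ha rfl)⟩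

lemma exists_cover (M : Type u) [AddCommGroup M] [Module S M] [Module.Finite S M] :
    ∃ (P : ModuleCat.{u} S) (g : P →ₗ[S] M), Module.Finite S P ∧ Module.Projective S P ∧
      Function.Surjective g := by
  obtain ⟨n, f, hf⟩ := Module.Finite.exists_fin' S M
  exact ⟨ModuleCat.of S (Fin n → S), f, inferInstanceAs (Module.Finite S (Fin n → S)),
    inferInstanceAs (Module.Projective S (Fin n → S)), hf⟩

variable [IsNoetherianRing S]

lemma mem_syz {W : Set (ModuleCat.{u} S)} (hW : IsResolving S W) [Module.Finite S P]
    [Module.Projective S P] {f : K →ₗ[S] P} {g : P →ₗ[S] M} (h : IsSES f g)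
    (hM : Mem W M) : Mem W K :=
  hW.syzygy_closed (ModuleCat.of S K) (ModuleCat.of S P) (ModuleCat.of S M) f g h
    (Module.Finite.of_injective f h.1) ‹_› ‹_› hM

/-- B1 : kernels of epimorphisms -/
lemma mem_ker {W : Set (ModuleCat.{u} S)} (hW : IsResolving S W) {f : A →ₗ[S] B}
    {g : B →ₗ[S] C} (h : IsSES f g) (hB : Mem W B) (hC : Mem W C) : Mem W A := by
  have := mem_fin hW hC
  obtain ⟨P, π, h1, h2, hπ⟩ := exists_cover (S := S) C
  have hK : Mem W (LinearMap.ker π) := mem_syz hW (ses_ker hπ) hC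
  obtain ⟨i, -, hi⟩ := pb_ses1 g (ses_ker hπ)
  have hQ : Mem W (pb g π) := mem_ext hW hi hK hB
  obtain ⟨σ, hσ⟩ := Module.projective_lifting_property g π h.2.1
  have hker : Mem W (LinearMap.ker g) := by
    refine mem_retract hW hQ
      (LinearMap.codRestrict _ (LinearMap.inl S B P ∘ₗ (LinearMap.ker g).subtype) ?_)
      (LinearMap.codRestrict _ (pb1 g π - σ ∘ₗ pb2 g π) ?_) ?_
    · rintro ⟨a, ha⟩
      rw [mem_pb]; simpa using ha
    · rintro ⟨⟨b, p⟩, hb⟩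
      rw [mem_pb] at hb
      have h3 := LinearMap.congr_fun hσ p
      simp only [LinearMap.comp_apply] at h3
      simp only at hb
      simp [pb1, pb2, LinearMap.mem_ker, h3, hb]
    · rintro ⟨a, ha⟩
      apply Subtype.ext
      simp [pb1, pb2]
  exact mem_iso hW h.kerEquiv.symm hker

/-- omega -/
def om (W : Set (ModuleCat.{u} S)) : Set (ModuleCat.{u} S) :=
  {M | ∃ (P : ModuleCat.{u} S) (g : P →ₗ[S] M), Module.Finite S P ∧ Module.Projective S P ∧
    Function.Surjective g ∧ Mem W (LinearMap.ker g)}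

lemma om_fin {W : Set (ModuleCat.{u} S)} (h : Mem (om W) M) : Module.Finite S M := by
  obtain ⟨P, g, h1, h2, h3, h4⟩ := h
  exact Module.Finite.of_surjective g h3

lemma om_mk {W : Set (ModuleCat.{u} S)} (hW : IsResolving S W) [h1 : Module.Finite S P]
    [h2 : Module.Projective S P] {f : K →ₗ[S] P} {g : P →ₗ[S] M} (h : IsSES f g)
    (hK : Mem W K) : Mem (om W) M :=
  ⟨ModuleCat.of S P, g, h1, h2, h.2.1, mem_iso hW h.kerEquiv hK⟩

lemma om_all {W : Set (ModuleCat.{u} S)} (hW : IsResolving S W) [Module.Finite S P]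
    [Module.Projective S P] {f : K →ₗ[S] P} {g : P →ₗ[S] M} (h : IsSES f g)
    (hM : Mem (om W) M) : Mem W K := by
  obtain ⟨P0, g0, h1, h2, h3, h4⟩ := hM
  obtain ⟨i, -, hi⟩ := pb_ses1 g (ses_ker h3)
  have hQ : Mem W (pb g g0) := mem_ext hW hi h4 (mem_proj hW P)
  obtain ⟨j, -, hj⟩ := pb_ses2 g0 h
  have : Mem W P0 := mem_proj hW P0
  exact mem_ker hW hj hQ this

lemma le_om {W : Set (ModuleCat.{u} S)} (hW : IsResolving S W) (h : Mem W M) :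
    Mem (om W) M := by
  have := mem_fin hW h
  obtain ⟨P, π, h1, h2, hπ⟩ := exists_cover (S := S) M
  exact om_mk hW (ses_ker hπ) (mem_syz hW (ses_ker hπ) h)

lemma om_of_ses {W : Set (ModuleCat.{u} S)} (hW : IsResolving S W) {f : A →ₗ[S] B}
    {g : B →ₗ[S] C} (h : IsSES f g) (hA : Mem W A) (hB : Mem W B) : Mem (om W) C := by
  have := mem_fin hW hB
  have : Module.Finite S C := Module.Finite.of_surjective g h.2.1
  obtain ⟨P, π, h1, h2, hπ⟩ := exists_cover (S := S) C
  obtain ⟨i, -, hi⟩ := pb_ses2 π h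
  have hP : Mem W P := mem_proj hW P
  have hQ : Mem W (pb g π) := mem_ext hW hi hA hP
  obtain ⟨j, -, hj⟩ := pb_ses1 g (ses_ker hπ)
  exact om_mk hW (ses_ker hπ) (mem_ker hW hj hQ hB)

/-- horseshoe -/
lemma horseshoe {f : A →ₗ[S] B} {g : B →ₗ[S] C} (h : IsSES f g) {π : P →ₗ[S] A}
    (hπ : Function.Surjective π) {ρ : F →ₗ[S] B} (hρ : Function.Surjective (g ∘ₗ ρ)) :
    Function.Surjective ((f ∘ₗ π).coprod ρ) ∧
    ∃ (i : LinearMap.ker π →ₗ[S] LinearMap.ker ((f ∘ₗ π).coprod ρ))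
      (j : LinearMap.ker ((f ∘ₗ π).coprod ρ) →ₗ[S] LinearMap.ker (g ∘ₗ ρ)), IsSES i j := by
  refine ⟨?_, ?_⟩
  · intro b
    obtain ⟨x, hx⟩ := hρ (g b)
    obtain ⟨a, ha⟩ := h.lift (b - ρ x) (by rw [map_sub, ← hx]; simp)
    obtain ⟨p, rfl⟩ := hπ a
    exact ⟨(p, x), by simp [ha]⟩
  · refine ⟨LinearMap.codRestrict _ (LinearMap.inl S P F ∘ₗ (LinearMap.ker π).subtype) ?_,
      LinearMap.codRestrict _ (LinearMap.snd S P F ∘ₗ (LinearMap.ker _).subtype) ?_, ?_⟩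
    · rintro ⟨p, hp⟩
      simp [LinearMap.mem_ker.1 hp]
    · rintro ⟨⟨p, x⟩, hp⟩
      have := congrArg g (LinearMap.mem_ker.1 hp)
      simpa [h.apply] using this
    · refine IsSES.mk' ?_ ?_ ?_ ?_
      · rintro ⟨p, hp⟩ h0
        have := congrArg (fun z => z.1.1) h0
        exact Subtype.ext this
      · rintro ⟨x, hx⟩
        obtain ⟨a, ha⟩ := h.lift (ρ x) hx
        obtain ⟨p, rfl⟩ := hπ a
        exact ⟨⟨(-p, x), by simp [ha]⟩, rfl⟩
      · intro a; rfl
      · rintro ⟨⟨p, x⟩, hp⟩ h0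
        have h1 : x = 0 := congrArg Subtype.val h0
        subst h1
        have h2 := LinearMap.mem_ker.1 hp
        simp only [LinearMap.coprod_apply, LinearMap.comp_apply, map_zero, add_zero] at h2
        exact ⟨⟨p, (injective_iff_map_eq_zero f).1 h.1 _ h2⟩, rfl⟩

lemma om_resolving {W : Set (ModuleCat.{u} S)} (hW : IsResolving S W) :
    IsResolving S (om W) where
  fg M h := om_fin h
  iso_closed := by
    rintro M N ⟨e⟩ ⟨P, g, h1, h2, h3, h4⟩
    have h5 : Function.Surjective (e.toLinearMap ∘ₗ g) := e.surjective.comp h3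
    refine ⟨P, e.toLinearMap ∘ₗ g, h1, h2, h5, ?_⟩
    rwa [LinearEquiv.ker_comp]
  proj_mem M h1 h2 := le_om hW (mem_proj hW M)
  summand_closed := by
    intro M N h
    have h0 : Mem (om W) (M × N) := h
    have := om_fin h0
    have : Module.Finite S M := Module.Finite.of_surjective (LinearMap.fst S M N) LinearMap.fst_surjective
    have : Module.Finite S N := Module.Finite.of_surjective (LinearMap.snd S M N) LinearMap.snd_surjective
    obtain ⟨P, π, h1, h2, hπ⟩ := exists_cover (S := S) M
    obtain ⟨P', π', h1', h2', hπ'⟩ := exists_cover (S := S) N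
    have hs : Function.Surjective (LinearMap.prodMap π π') := Function.Surjective.prodMap hπ hπ'
    have hk := om_all hW (ses_ker hs) h0
    refine om_mk hW (ses_ker hπ) (mem_retract hW hk
      (LinearMap.codRestrict _ (LinearMap.inl S P P' ∘ₗ (LinearMap.ker π).subtype) ?_)
      (LinearMap.codRestrict _ (LinearMap.fst S P P' ∘ₗ (LinearMap.ker _).subtype) ?_) ?_)
    · rintro ⟨p, hp⟩; simpa using hp
    · rintro ⟨⟨p, q⟩, hp⟩
      exact congrArg Prod.fst hp
    · rintro ⟨p, hp⟩; rfl
  ext_closed := by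
    rintro A B C f g h ⟨P, π, h1, h2, hπ, hK⟩ ⟨P', π', h1', h2', hπ', hK'⟩
    obtain ⟨σ, hσ⟩ := Module.projective_lifting_property g π' h.2.1
    subst hσ
    obtain ⟨hs, i, j, hij⟩ := horseshoe h hπ hπ'
    exact om_mk (M := B) hW (ses_ker hs) (mem_ext hW hij hK hK')
  syzygy_closed := by
    intro K P M f g h _ _ _ hM
    exact le_om hW (om_all (M := M) (K := K) hW h hM)

lemma om_mono {W V : Set (ModuleCat.{u} S)} (h : W ⊆ V) : om W ⊆ om V := by
  rintro M ⟨P, g, h1, h2, h3, h4⟩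
  exact ⟨P, g, h1, h2, h3, h h4⟩

lemma subset_om {W : Set (ModuleCat.{u} S)} (hW : IsResolving S W) : W ⊆ om W :=
  fun M h => le_om (M := M) hW h

/-- iterated omega -/
def omn (n : ℕ) (W : Set (ModuleCat.{u} S)) : Set (ModuleCat.{u} S) := om^[n] W

lemma omn_zero (W : Set (ModuleCat.{u} S)) : omn 0 W = W := rfl
lemma omn_succ (n : ℕ) (W : Set (ModuleCat.{u} S)) : omn (n+1) W = omn n (om W) := rfl
lemma omn_succ' (n : ℕ) (W : Set (ModuleCat.{u} S)) : omn (n+1) W = om (omn n W) :=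
  Function.iterate_succ_apply' _ _ _

lemma omn_resolving {W : Set (ModuleCat.{u} S)} (hW : IsResolving S W) (n : ℕ) :
    IsResolving S (omn n W) := by
  induction n with
  | zero => exact hW
  | succ n ih => rw [omn_succ']; exact om_resolving ih

lemma omn_mono {W V : Set (ModuleCat.{u} S)} (h : W ⊆ V) (n : ℕ) : omn n W ⊆ omn n V := by
  induction n with
  | zero => exact h
  | succ n ih => rw [omn_succ', omn_succ']; exact om_mono ih

lemma omn_le {W : Set (ModuleCat.{u} S)} (hW : IsResolving S W) {m n : ℕ} (h : m ≤ n) :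
    omn m W ⊆ omn n W := by
  induction n, h using Nat.le_induction with
  | base => exact le_rfl
  | succ n _ ih => rw [omn_succ']; exact ih.trans (subset_om (omn_resolving hW n))

end PartB

section PartB2

set_option linter.unusedSectionVars false

variable {S : Type u} [CommRing S] [IsNoetherianRing S]
variable {A B C A' B' M N X Y F F' K P : Type u}
  [AddCommGroup A] [Module S A] [AddCommGroup B] [Module S B] [AddCommGroup C] [Module S C]
  [AddCommGroup A'] [Module S A'] [AddCommGroup B'] [Module S B']
  [AddCommGroup M] [Module S M] [AddCommGroup N] [Module S N]
  [AddCommGroup X] [Module S X] [AddCommGroup Y] [Module S Y]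
  [AddCommGroup F] [Module S F] [AddCommGroup F'] [Module S F']
  [AddCommGroup K] [Module S K] [AddCommGroup P] [Module S P]

/-- the map `(m, f) ↦ x m + π f` -/
def cmap (x : S) (π : F →ₗ[S] M) : (M × F) →ₗ[S] M := (x • LinearMap.id).coprod π

lemma cmap_apply (x : S) (π : F →ₗ[S] M) (m : M) (f : F) : cmap x π (m, f) = x • m + π f := by
  simp [cmap]

lemma cmap_surj (x : S) {π : F →ₗ[S] M} (h : Function.Surjective π) :
    Function.Surjective (cmap x π) := by
  intro m
  obtain ⟨f, hf⟩ := h m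
  exact ⟨(0, f), by simp [cmap_apply, hf]⟩

/-- the kernel `c(M, x)` -/
abbrev cker (x : S) (π : F →ₗ[S] M) : Submodule S (M × F) := LinearMap.ker (cmap x π)

lemma mem_cker {x : S} {π : F →ₗ[S] M} {z : M × F} : z ∈ cker x π ↔ x • z.1 + π z.2 = 0 := by
  rw [LinearMap.mem_ker, ← cmap_apply]

/-- bracket -/
def brx (W : Set (ModuleCat.{u} S)) (x : S) : Set (ModuleCat.{u} S) :=
  {M | ∃ (P : ModuleCat.{u} S) (g : P →ₗ[S] M), Module.Finite S P ∧ Module.Projective S P ∧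
    Function.Surjective g ∧ Mem W (cker x g)}

lemma ses_add (x : S) {π : F →ₗ[S] M} (hπ : Function.Surjective π) (ρ : F' →ₗ[S] M) :
    ∃ (i : cker x π →ₗ[S] cker x (π.coprod ρ)) (j : cker x (π.coprod ρ) →ₗ[S] F'),
      IsSES i j := by
  refine ⟨LinearMap.codRestrict _
    ((LinearMap.prodMap LinearMap.id (LinearMap.inl S F F')) ∘ₗ (cker x π).subtype) ?_,
    LinearMap.snd S F F' ∘ₗ LinearMap.snd S M (F × F') ∘ₗ (cker x _).subtype, ?_⟩
  · rintro ⟨⟨m, f⟩, h⟩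
    rw [mem_cker] at h ⊢
    simpa using h
  · refine IsSES.mk' ?_ ?_ ?_ ?_
    · rintro ⟨⟨m, f⟩, h⟩ h0
      have h1 : m = 0 := congrArg (fun z => z.1.1) h0
      have h2 : f = 0 := congrArg (fun z => z.1.2.1) h0
      subst h1 h2; rfl
    · intro f'
      obtain ⟨f, hf⟩ := hπ (- ρ f')
      exact ⟨⟨(0, f, f'), by rw [mem_cker]; simp [hf]⟩, rfl⟩
    · rintro ⟨⟨m, f⟩, h⟩; rfl
    · rintro ⟨⟨m, f, f'⟩, h⟩ h0
      change f' = 0 at h0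
      subst h0
      rw [mem_cker] at h
      refine ⟨⟨(m, f), by rw [mem_cker]; simpa using h⟩, rfl⟩

lemma ses_add' (x : S) (π : F →ₗ[S] M) {ρ : F' →ₗ[S] M} (hρ : Function.Surjective ρ) :
    ∃ (i : cker x ρ →ₗ[S] cker x (π.coprod ρ)) (j : cker x (π.coprod ρ) →ₗ[S] F),
      IsSES i j := by
  refine ⟨LinearMap.codRestrict _
    ((LinearMap.prodMap LinearMap.id (LinearMap.inr S F F')) ∘ₗ (cker x ρ).subtype) ?_,
    LinearMap.fst S F F' ∘ₗ LinearMap.snd S M (F × F') ∘ₗ (cker x _).subtype, ?_⟩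
  · rintro ⟨⟨m, f⟩, h⟩
    rw [mem_cker] at h ⊢
    simpa using h
  · refine IsSES.mk' ?_ ?_ ?_ ?_
    · rintro ⟨⟨m, f⟩, h⟩ h0
      have h1 : m = 0 := congrArg (fun z => z.1.1) h0
      have h2 : f = 0 := congrArg (fun z => z.1.2.2) h0
      subst h1 h2; rfl
    · intro f'
      obtain ⟨f, hf⟩ := hρ (- π f')
      exact ⟨⟨(0, f', f), by rw [mem_cker]; simp [hf]⟩, rfl⟩
    · rintro ⟨⟨m, f⟩, h⟩; rfl
    · rintro ⟨⟨m, f', f⟩, h⟩ h0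
      change f' = 0 at h0
      subst h0
      rw [mem_cker] at h
      refine ⟨⟨(m, f), by rw [mem_cker]; simpa using h⟩, rfl⟩

lemma brx_all {W : Set (ModuleCat.{u} S)} (hW : IsResolving S W) {x : S} [Module.Finite S P]
    [Module.Projective S P] {π : P →ₗ[S] M} (h : Function.Surjective π)
    (hM : Mem (brx W x) M) : Mem W (cker x π) := by
  obtain ⟨Q, ρ, h1, h2, h3, h4⟩ := hM
  obtain ⟨i, j, hij⟩ := ses_add x h ρ
  obtain ⟨i', j', hij'⟩ := ses_add' x π h3
  have hQ : Mem W Q := mem_proj hW Q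
  exact mem_ker hW hij (mem_ext hW hij' h4 (mem_proj hW P)) hQ

lemma brx_mk {W : Set (ModuleCat.{u} S)} {x : S} [h1 : Module.Finite S P]
    [h2 : Module.Projective S P] {π : P →ₗ[S] M} (h : Function.Surjective π)
    (hM : Mem W (cker x π)) : Mem (brx W x) M :=
  ⟨ModuleCat.of S P, π, h1, h2, h, hM⟩

lemma brx_fin {W : Set (ModuleCat.{u} S)} {x : S} (h : Mem (brx W x) M) :
    Module.Finite S M := by
  obtain ⟨P, g, h1, h2, h3, h4⟩ := h
  exact Module.Finite.of_surjective g h3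

lemma le_brx {W : Set (ModuleCat.{u} S)} (hW : IsResolving S W) (x : S) (h : Mem W M) :
    Mem (brx W x) M := by
  have := mem_fin hW h
  obtain ⟨P, π, h1, h2, hπ⟩ := exists_cover (S := S) M
  have hP : Mem W P := mem_proj hW P
  exact brx_mk hπ (mem_ker hW (ses_ker (cmap_surj x hπ)) (mem_prod hW h hP) h)

/-- the exact sequence of kernels -/
lemma ses_cker (x : S) {f : A →ₗ[S] B} {g : B →ₗ[S] C} (h : IsSES f g) {π : P →ₗ[S] A}
    (hπ : Function.Surjective π) (ρ : F →ₗ[S] B) :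
    ∃ (i : cker x π →ₗ[S] cker x ((f ∘ₗ π).coprod ρ))
      (j : cker x ((f ∘ₗ π).coprod ρ) →ₗ[S] cker x (g ∘ₗ ρ)), IsSES i j := by
  refine ⟨LinearMap.codRestrict _
    ((LinearMap.prodMap f (LinearMap.inl S P F)) ∘ₗ (cker x π).subtype) ?_,
    LinearMap.codRestrict _
    ((LinearMap.prodMap g (LinearMap.snd S P F)) ∘ₗ (cker x _).subtype) ?_, ?_⟩
  · rintro ⟨⟨m, p⟩, h⟩
    rw [mem_cker] at h ⊢
    have := congrArg f h
    simpa using this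
  · rintro ⟨⟨m, p, q⟩, h'⟩
    rw [mem_cker] at h' ⊢
    have := congrArg g h'
    simpa [h.apply] using this
  · refine IsSES.mk' ?_ ?_ ?_ ?_
    · rintro ⟨⟨m, p⟩, h'⟩ h0
      have h1 : f m = 0 := congrArg (fun z => z.1.1) h0
      have h1 : m = 0 := (injective_iff_map_eq_zero f).1 h.1 _ h1
      have h2 : p = 0 := congrArg (fun z => z.1.2.1) h0
      subst h1 h2; rfl
    · rintro ⟨⟨c, q⟩, h'⟩
      rw [mem_cker] at h'
      obtain ⟨b, rfl⟩ := h.2.1 c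
      obtain ⟨a, ha⟩ := h.lift (x • b + ρ q) (by simpa using h')
      obtain ⟨p, rfl⟩ := hπ a
      refine ⟨⟨(b, -p, q), ?_⟩, rfl⟩
      rw [mem_cker]
      simp only [LinearMap.coprod_apply, LinearMap.comp_apply, map_neg, ha]
      abel
    · rintro ⟨⟨m, p⟩, h'⟩
      exact Subtype.ext (Prod.ext (h.apply m) rfl)
    · rintro ⟨⟨b, p, q⟩, h'⟩ h0
      have h1 : g b = 0 := congrArg (fun z => z.1.1) h0
      have h2 : q = 0 := congrArg (fun z => z.1.2) h0
      subst h2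
      obtain ⟨a, rfl⟩ := h.lift b h1
      rw [mem_cker] at h'
      refine ⟨⟨(a, p), ?_⟩, rfl⟩
      rw [mem_cker]
      apply h.1
      simpa using h'

lemma brx_resolving {W : Set (ModuleCat.{u} S)} (hW : IsResolving S W) (x : S) :
    IsResolving S (brx W x) where
  fg M h := brx_fin h
  iso_closed := by
    rintro M N ⟨e⟩ h
    obtain ⟨P, g, h1, h2, h3, h4⟩ := id h
    have h5 : Function.Surjective (e.toLinearMap ∘ₗ g) := e.surjective.comp h3
    refine ⟨P, e.toLinearMap ∘ₗ g, h1, h2, h5, ?_⟩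
    refine mem_retract hW h4
      (LinearMap.codRestrict _
        ((LinearMap.prodMap e.symm.toLinearMap LinearMap.id) ∘ₗ (cker x _).subtype) ?_)
      (LinearMap.codRestrict _
        ((LinearMap.prodMap e.toLinearMap LinearMap.id) ∘ₗ (cker x _).subtype) ?_) ?_
    · rintro ⟨⟨m, f⟩, h⟩
      rw [mem_cker] at h ⊢
      have := congrArg e.symm h
      simpa using this
    · rintro ⟨⟨m, f⟩, h⟩
      rw [mem_cker] at h ⊢
      have := congrArg e h
      simpa using this
    · rintro ⟨⟨m, f⟩, h⟩
      apply Subtype.ext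
      simp
  proj_mem M h1 h2 := le_brx hW x (mem_proj hW M)
  summand_closed := by
    intro M N h
    have h0 : Mem (brx W x) (M × N) := h
    have := brx_fin h0
    have : Module.Finite S M := Module.Finite.of_surjective (LinearMap.fst S M N) LinearMap.fst_surjective
    have : Module.Finite S N := Module.Finite.of_surjective (LinearMap.snd S M N) LinearMap.snd_surjective
    obtain ⟨P, π, h1, h2, hπ⟩ := exists_cover (S := S) M
    obtain ⟨P', π', h1', h2', hπ'⟩ := exists_cover (S := S) N
    have hs : Function.Surjective (LinearMap.prodMap π π') := Function.Surjective.prodMap hπ hπ'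
    have hk := brx_all hW hs h0
    refine brx_mk hπ (mem_retract hW hk
      (LinearMap.codRestrict _ ((LinearMap.prodMap (LinearMap.inl S M N) (LinearMap.inl S P P')) ∘ₗ
        (cker x π).subtype) ?_)
      (LinearMap.codRestrict _ ((LinearMap.prodMap (LinearMap.fst S M N) (LinearMap.fst S P P')) ∘ₗ
        (cker x _).subtype) ?_) ?_)
    · rintro ⟨⟨m, p⟩, hp⟩
      rw [mem_cker] at hp ⊢
      simpa using hp
    · rintro ⟨⟨⟨m, n⟩, ⟨p, q⟩⟩, hp⟩
      rw [mem_cker] at hp ⊢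
      exact congrArg Prod.fst hp
    · rintro ⟨p, hp⟩; rfl
  ext_closed := by
    rintro A B C f g h ⟨P, π, h1, h2, hπ, hK⟩ hC
    have : Module.Finite S C := brx_fin hC
    have : Module.Finite S A := Module.Finite.of_surjective π hπ
    obtain ⟨P0, π0, h10, h20, hπ0⟩ := exists_cover (S := S) C
    obtain ⟨σ, hσ⟩ := Module.projective_lifting_property g π0 h.2.1
    subst hσ
    obtain ⟨i, j, hij⟩ := ses_cker x h hπ σ
    have := brx_all hW hπ0 hC
    obtain ⟨hs, -⟩ := horseshoe h hπ hπ0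
    exact brx_mk (M := B) hs (mem_ext hW hij hK this)
  syzygy_closed := by
    intro K P M f g h _ _ _ hM
    obtain ⟨P', π', h1', h2', hπ'⟩ := exists_cover (S := S) K
    obtain ⟨i, j, hij⟩ := ses_cker x h hπ' LinearMap.id
    have h5 := brx_all (M := M) (x := x) hW (π := g ∘ₗ LinearMap.id) h.2.1 hM
    have h6 : Mem W P := mem_proj hW P
    have h7 : Mem (brx W x) P := le_brx hW x h6
    have h8 : Function.Surjective ((f ∘ₗ π').coprod (LinearMap.id : P →ₗ[S] P)) :=
      fun p => ⟨(0, p), by simp⟩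
    have := brx_all hW h8 h7
    exact brx_mk (M := K) hπ' (mem_ker hW hij this h5)

lemma brx_mono {W V : Set (ModuleCat.{u} S)} (h : W ⊆ V) (x : S) : brx W x ⊆ brx V x := by
  rintro M ⟨P, g, h1, h2, h3, h4⟩
  exact ⟨P, g, h1, h2, h3, h h4⟩

lemma subset_brx {W : Set (ModuleCat.{u} S)} (hW : IsResolving S W) (x : S) : W ⊆ brx W x :=
  fun M h => le_brx (M := M) hW x h

/-- commutation -/
lemma brx_om {W : Set (ModuleCat.{u} S)} (hW : IsResolving S W) (x : S) :
    brx (om W) x ⊆ om (brx W x) := by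
  rintro M ⟨P, g, h1, h2, h3, h4⟩
  refine ⟨P, g, h1, h2, h3, ?_⟩
  obtain ⟨P', π', h1', h2', hπ'⟩ := exists_cover (S := S) (LinearMap.ker g)
  obtain ⟨i, j, hij⟩ := ses_cker x (ses_ker h3) hπ' LinearMap.id
  have h8 : Function.Surjective (((LinearMap.ker g).subtype ∘ₗ π').coprod
    (LinearMap.id : P →ₗ[S] P)) := fun p => ⟨(0, p), by simp⟩
  have h9 := cmap_surj x h8
  obtain ⟨s, hs⟩ := Module.projective_lifting_property _ (LinearMap.id : P →ₗ[S] P) h9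
  have hp : Module.Projective S (cker x (((LinearMap.ker g).subtype ∘ₗ π').coprod
    (LinearMap.id : P →ₗ[S] P))) := by
    refine Module.Projective.of_split (Submodule.subtype _)
      (LinearMap.codRestrict _ (LinearMap.id - s ∘ₗ
        cmap x (((LinearMap.ker g).subtype ∘ₗ π').coprod (LinearMap.id : P →ₗ[S] P))) ?_) ?_
    · intro z
      have := LinearMap.congr_fun hs (cmap x (((LinearMap.ker g).subtype ∘ₗ π').coprod
        (LinearMap.id : P →ₗ[S] P)) z)
      simp only [LinearMap.comp_apply, LinearMap.id_apply] at this
      rw [LinearMap.mem_ker, LinearMap.sub_apply, map_sub]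
      simp only [LinearMap.comp_apply, LinearMap.id_apply, this, sub_self]
    · ext1 z
      apply Subtype.ext
      have hz := LinearMap.mem_ker.1 z.2
      simp only [LinearMap.comp_apply, Submodule.subtype_apply, LinearMap.codRestrict_apply,
        LinearMap.sub_apply, hz, map_zero, LinearMap.id_apply, sub_zero]
  exact brx_mk hπ' (om_all hW hij h4)

/-- factoring through W -/
def Fac (W : Set (ModuleCat.{u} S)) (M : Type u) [AddCommGroup M] [Module S M] (s : S) : Prop :=
  ∃ (X : ModuleCat.{u} S) (b : M →ₗ[S] X) (a : X →ₗ[S] M), X ∈ W ∧ ∀ m, a (b m) = s • m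

lemma Fac.mk {W : Set (ModuleCat.{u} S)} {s : S} (h : Mem W X) (b : M →ₗ[S] X) (a : X →ₗ[S] M)
    (hab : ∀ m, a (b m) = s • m) : Fac W M s :=
  ⟨ModuleCat.of S X, b, a, h, hab⟩

lemma Fac.mono {W V : Set (ModuleCat.{u} S)} (h : W ⊆ V) {s : S} (hs : Fac W M s) :
    Fac V M s := by
  obtain ⟨X, b, a, hX, hab⟩ := hs
  exact ⟨X, b, a, h hX, hab⟩

/-- the ideal of factoring elements -/
def facI {W : Set (ModuleCat.{u} S)} (hW : IsResolving S W) (M : Type u) [AddCommGroup M]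
    [Module S M] : Ideal S where
  carrier := {s | Fac W M s}
  zero_mem' := Fac.mk (mem_proj hW S) 0 0 (by simp)
  add_mem' := by
    rintro s t ⟨X, b, a, hX, hab⟩ ⟨Y, d, c, hY, hcd⟩
    refine Fac.mk (mem_prod hW (A := X) (B := Y) hX hY) (b.prod d) (a.coprod c) ?_
    intro m
    simp [hab, hcd, add_smul]
  smul_mem' := by
    rintro r s ⟨X, b, a, hX, hab⟩
    refine ⟨X, b, r • a, hX, ?_⟩
    intro m
    simp [hab, mul_smul]

lemma mem_facI {W : Set (ModuleCat.{u} S)} (hW : IsResolving S W) {s : S} :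
    s ∈ facI hW M ↔ Fac W M s := Iff.rfl

lemma Fac.mem_of_one {W : Set (ModuleCat.{u} S)} (hW : IsResolving S W) (h : Fac W M 1) :
    Mem W M := by
  obtain ⟨X, b, a, hX, hab⟩ := h
  exact mem_retract hW (X := X) hX b a (by simpa using hab)

lemma Fac.of_mem {W : Set (ModuleCat.{u} S)} (h : Mem W M) (s : S) : Fac W M s :=
  Fac.mk h LinearMap.id (s • LinearMap.id) (by simp)

lemma mem_of_facI_top {W : Set (ModuleCat.{u} S)} (hW : IsResolving S W)
    (h : facI hW M = ⊤) : Mem W M :=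
  Fac.mem_of_one hW ((mem_facI hW).1 (h ▸ Submodule.mem_top))

lemma key1 {W : Set (ModuleCat.{u} S)} (hW : IsResolving S W) {x : S} (h : Mem (brx W x) M)
    (hx : Fac W M x) : Mem W M := by
  obtain ⟨X, b, a, hX, hab⟩ := hx
  obtain ⟨P, π, h1, h2, h3, h4⟩ := h
  have hs := cmap_surj x h3
  obtain ⟨i, -, hi⟩ := pb_ses2 (a.coprod π) (ses_ker hs)
  have hP : Mem W P := mem_proj hW P
  have hQ := mem_ext hW hi h4 (mem_prod hW (A := X) hX hP)
  refine mem_retract hW hQ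
    (LinearMap.codRestrict _ ((LinearMap.inl S M P).prod (LinearMap.inl S X P ∘ₗ b)) ?_)
    (LinearMap.fst S M P ∘ₗ pb1 _ _) ?_
  · intro m
    rw [mem_pb]
    simp [cmap_apply, hab]
  · intro m
    simp [pb1]

lemma Fac.syz {W : Set (ModuleCat.{u} S)} (hW : IsResolving S W) {s : S} [Module.Finite S P]
    [Module.Projective S P] {f : K →ₗ[S] P} {g : P →ₗ[S] M} (h : IsSES f g)
    (hM : Fac W M s) : Fac W K s := by
  obtain ⟨X, b, a, hX, hab⟩ := hM
  have hX' : Mem W X := hX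
  have := mem_fin hW hX'
  obtain ⟨Q, π, h1, h2, hπ⟩ := exists_cover (S := S) X
  have hY := mem_syz hW (ses_ker hπ) hX'
  obtain ⟨b', hb'⟩ := Module.projective_lifting_property π (b ∘ₗ g) hπ
  obtain ⟨a', ha'⟩ := Module.projective_lifting_property g (a ∘ₗ π) h.2.1
  replace hb' : ∀ p, π (b' p) = b (g p) := fun p => LinearMap.congr_fun hb' p
  replace ha' : ∀ p, g (a' p) = a (π p) := fun p => LinearMap.congr_fun ha' p
  let e := h.kerEquiv
  have hW' : Mem W (LinearMap.ker g) → True := fun _ => trivial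
  suffices hk : Fac W (LinearMap.ker g) s by
    obtain ⟨Z, d, c, hZ, hcd⟩ := hk
    refine ⟨Z, d ∘ₗ e.toLinearMap, e.symm.toLinearMap ∘ₗ c, hZ, ?_⟩
    intro k
    simp [hcd]
  refine Fac.mk (mem_prod hW hY (mem_proj hW P))
    ((LinearMap.codRestrict _ (b' ∘ₗ (LinearMap.ker g).subtype) ?_).prod
      (LinearMap.ker g).subtype)
    (LinearMap.coprod (LinearMap.codRestrict _ (a' ∘ₗ (LinearMap.ker π).subtype) ?_)
      (LinearMap.codRestrict _ (s • LinearMap.id - a' ∘ₗ b') ?_)) ?_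
  · rintro ⟨p, hp⟩
    simp [hb', LinearMap.mem_ker.1 hp]
  · rintro ⟨q, hq⟩
    simp [ha', LinearMap.mem_ker.1 hq]
  · intro p
    simp [ha', hb', hab]
  · rintro ⟨p, hp⟩
    apply Subtype.ext
    simp

lemma Fac.ses {W : Set (ModuleCat.{u} S)} (hW : IsResolving S W) {s t : S} {f : A →ₗ[S] B}
    {g : B →ₗ[S] C} (h : IsSES f g) (hA : Fac W A s) (hC : Fac W C t) : Fac W B (s * t) := by
  obtain ⟨X, b, a, hX, hab⟩ := hA
  obtain ⟨Y, d, c, hY, hcd⟩ := hC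
  obtain ⟨i, hi0, hi⟩ := pb_ses2 c h
  let N : Submodule S (X × pb g c) := LinearMap.range (b.prod (-i))
  have hses : IsSES (N.mkQ ∘ₗ LinearMap.inl S X (pb g c))
      (N.liftQ (pb2 g c ∘ₗ LinearMap.snd S X (pb g c)) (by
        rintro _ ⟨z, rfl⟩
        simpa using hi.apply z)) := by
    refine IsSES.mk' ?_ ?_ ?_ ?_
    · intro x hx
      simp only [LinearMap.comp_apply, Submodule.mkQ_apply, Submodule.Quotient.mk_eq_zero] at hx
      obtain ⟨z, hz⟩ := hx
      have h2 := congrArg Prod.snd hz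
      have h1 := congrArg Prod.fst hz
      change b z = x at h1
      change - i z = 0 at h2
      rw [neg_eq_zero] at h2
      have := (injective_iff_map_eq_zero i).1 hi.1 z h2
      rw [← h1, this, map_zero]
    · intro y
      obtain ⟨q, hq⟩ := hi.2.1 y
      exact ⟨N.mkQ (0, q), by simp [hq]⟩
    · intro x; simp
    · intro z hz
      obtain ⟨⟨x, q⟩, rfl⟩ := N.mkQ_surjective z
      simp only [Submodule.mkQ_apply, Submodule.liftQ_apply, LinearMap.comp_apply,
        LinearMap.snd_apply] at hz
      obtain ⟨w, rfl⟩ := hi.lift q hz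
      refine ⟨x + b w, ?_⟩
      simp only [LinearMap.comp_apply, Submodule.mkQ_apply]
      rw [Submodule.Quotient.eq]
      exact ⟨w, by simp⟩
  have hZ : Mem W ((X × pb g c) ⧸ N) := mem_ext hW (A := X) (C := Y) hses hX hY
  refine Fac.mk hZ
    (N.mkQ ∘ₗ LinearMap.inr S X (pb g c) ∘ₗ
      LinearMap.codRestrict _ ((t • LinearMap.id).prod (d ∘ₗ g)) ?_)
    (N.liftQ ((f ∘ₗ a).coprod (s • pb1 g c)) ?_) ?_
  · intro z
    rw [mem_pb]
    simp [hcd]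
  · rintro _ ⟨z, rfl⟩
    simp [hab, pb1, hi0]
  · intro m
    simp [pb1, mul_smul]

/-- iterated bracket -/
def brk (W : Set (ModuleCat.{u} S)) : List S → Set (ModuleCat.{u} S)
  | [] => W
  | x :: l => brx (brk W l) x

lemma brk_resolving {W : Set (ModuleCat.{u} S)} (hW : IsResolving S W) (l : List S) :
    IsResolving S (brk W l) := by
  induction l with
  | nil => exact hW
  | cons x l ih => exact brx_resolving ih x

lemma subset_brk {W : Set (ModuleCat.{u} S)} (hW : IsResolving S W) (l : List S) :
    W ⊆ brk W l := by
  induction l with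
  | nil => exact le_rfl
  | cons x l ih => exact ih.trans (subset_brx (brk_resolving hW l) x)

lemma brk_mono {W V : Set (ModuleCat.{u} S)} (h : W ⊆ V) (l : List S) : brk W l ⊆ brk V l := by
  induction l with
  | nil => exact h
  | cons x l ih => exact brx_mono ih x

lemma brk_om {W : Set (ModuleCat.{u} S)} (hW : IsResolving S W) (l : List S) :
    brk (om W) l ⊆ om (brk W l) := by
  induction l with
  | nil => exact le_rfl
  | cons x l ih => exact (brx_mono ih x).trans (brx_om (brk_resolving hW l) x)

lemma brk_omn {W : Set (ModuleCat.{u} S)} (hW : IsResolving S W) (l : List S) (n : ℕ) :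
    brk (omn n W) l ⊆ omn n (brk W l) := by
  induction n with
  | zero => exact le_rfl
  | succ n ih =>
    rw [omn_succ', omn_succ']
    exact (brk_om (omn_resolving hW n) l).trans (om_mono ih)

lemma peel {W : Set (ModuleCat.{u} S)} (hW : IsResolving S W) (l : List S)
    (h : Mem (brk W l) M) (hl : ∀ x ∈ l, Fac W M x) : Mem W M := by
  induction l with
  | nil => exact h
  | cons x l ih =>
    apply ih
    · exact key1 (brk_resolving hW l) h ((hl x (by simp)).mono (subset_brk hW l))
    · exact fun y hy => hl y (by simp [hy])

lemma brx_of_quot {W : Set (ModuleCat.{u} S)} (hW : IsResolving S W) (x : S)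
    [Module.Finite S M]
    (h1 : Mem W (LinearMap.ker (x • LinearMap.id : M →ₗ[S] M)))
    (h2 : Mem (om W) (QuotSMulTop x M)) : Mem (brx W x) M := by
  obtain ⟨P, π, h1', h2', hπ⟩ := exists_cover (S := S) M
  let q : M →ₗ[S] QuotSMulTop x M := Submodule.mkQ _
  have hq : ∀ m, q m = 0 ↔ ∃ y, x • y = m := by
    intro m
    simp only [q, Submodule.mkQ_apply]
    rw [Submodule.Quotient.mk_eq_zero, Submodule.mem_smul_pointwise_iff_exists]
    simp
  have hq' : Function.Surjective (q ∘ₗ π) := (Submodule.mkQ_surjective _).comp hπ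
  have h3 := om_all hW (ses_ker hq') h2
  refine brx_mk hπ (mem_ext (A := LinearMap.ker (x • LinearMap.id : M →ₗ[S] M)) hW
    (f := LinearMap.codRestrict _ (LinearMap.inl S M P ∘ₗ (LinearMap.ker _).subtype) ?_)
    (g := LinearMap.codRestrict _ (LinearMap.snd S M P ∘ₗ (LinearMap.ker _).subtype) ?_)
    ?_ h1 h3)
  · rintro ⟨m, hm⟩
    rw [mem_cker]
    simpa using hm
  · rintro ⟨⟨m, p⟩, hm⟩
    rw [mem_cker] at hm
    rw [LinearMap.mem_ker]
    exact (hq _).2 ⟨-m, by simpa using (eq_neg_of_add_eq_zero_left hm ▸ by simp)⟩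
  · refine IsSES.mk' ?_ ?_ ?_ ?_
    · rintro ⟨m, hm⟩ h0
      exact Subtype.ext (congrArg (fun z => z.1.1) h0)
    · rintro ⟨p, hp⟩
      obtain ⟨y, hy⟩ := (hq _).1 (LinearMap.mem_ker.1 hp)
      exact ⟨⟨(-y, p), by rw [mem_cker]; simp [hy]⟩, rfl⟩
    · intro a; rfl
    · rintro ⟨⟨m, p⟩, hm⟩ h0
      have h1 : p = 0 := congrArg Subtype.val h0
      subst h1
      rw [mem_cker] at hm
      exact ⟨⟨m, by simpa using hm⟩, rfl⟩

lemma kill_brk {W : Set (ModuleCat.{u} S)} (hW : IsResolving S W) (l pre : List S)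
    (h : ∀ (N : Type u) [AddCommGroup N] [Module S N] [Module.Finite S N],
      (∀ x ∈ pre, ∀ n : N, x • n = 0) → (∀ x ∈ l, ∀ n : N, x • n = 0) → Mem W N)
    (N : Type u) [AddCommGroup N] [Module S N] [Module.Finite S N]
    (hN : ∀ x ∈ pre, ∀ n : N, x • n = 0) : Mem (brk W l) N := by
  induction l generalizing pre N with
  | nil => exact h N hN (by simp)
  | cons x l ih =>
    have key := fun (N : Type u) [AddCommGroup N] [Module S N] [Module.Finite S N]
      (h1 : ∀ x ∈ pre, ∀ n : N, x • n = 0) (h2 : ∀ n : N, x • n = 0) =>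
        ih (x :: pre) (by
          intro N _ _ _ h1 h2
          apply h N
          · exact fun y hy => h1 y (by simp [hy])
          · intro y hy
            rcases List.mem_cons.1 hy with rfl | hy
            · exact h1 y (by simp)
            · exact h2 y hy) N (by
          intro y hy
          rcases List.mem_cons.1 hy with rfl | hy
          · exact h2
          · exact h1 y hy)
    refine brx_of_quot (brk_resolving hW l) x (key _ ?_ ?_) (le_om (brk_resolving hW l) (key _ ?_ ?_))
    · rintro y hy ⟨n, hn⟩; exact Subtype.ext (hN y hy n)
    · rintro ⟨n, hn⟩; exact Subtype.ext hn
    · intro y hy n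
      obtain ⟨n, rfl⟩ := Submodule.mkQ_surjective _ n
      rw [← map_smul, hN y hy, map_zero]
    · intro n
      obtain ⟨n, rfl⟩ := Submodule.mkQ_surjective _ n
      rw [← map_smul, Submodule.mkQ_apply, Submodule.Quotient.mk_eq_zero]
      exact Submodule.smul_mem_pointwise_smul _ _ _ trivial

theorem thmT0 {W : Set (ModuleCat.{u} S)} (hW : IsResolving S W) (l : List S)
    (h : ∀ (N : Type u) [AddCommGroup N] [Module S N] [Module.Finite S N],
      (∀ x ∈ l, ∀ n : N, x • n = 0) → Mem W N)
    [Module.Finite S N] (hN : ∀ x ∈ l, Fac W N x) : Mem W N :=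
  peel hW l (kill_brk hW l [] (fun N _ _ _ _ h2 => h N h2) N (by simp)) hN

lemma reg_brk {W : Set (ModuleCat.{u} S)} (hW : IsResolving S W) (rs : List S)
    (h : ∀ (N : Type u) [AddCommGroup N] [Module S N] [Module.Finite S N], Mem (omn rs.length W) N)
    (N : Type u) [AddCommGroup N] [Module S N] [Module.Finite S N]
    (hN : RingTheory.Sequence.IsWeaklyRegular N rs) : Mem (brk W rs) N := by
  induction rs generalizing N W with
  | nil => exact h N
  | cons x rs ih =>
    rw [RingTheory.Sequence.isWeaklyRegular_cons_iff] at hN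
    have h1 := ih (om_resolving hW) h (QuotSMulTop x N) hN.2
    refine brx_of_quot (brk_resolving hW rs) x ?_ (brk_om hW rs h1)
    have : Subsingleton (LinearMap.ker (x • LinearMap.id : N →ₗ[S] N)) := by
      refine ⟨?_⟩
      rintro ⟨a, ha⟩ ⟨b, hb⟩
      apply Subtype.ext
      apply hN.1
      change x • a = 0 at ha
      change x • b = 0 at hb
      change x • a = x • b
      rw [ha, hb]
    exact mem_proj (brk_resolving hW rs) _

theorem thmTL {W : Set (ModuleCat.{u} S)} (hW : IsResolving S W) (rs l : List S)
    (h : ∀ (N : Type u) [AddCommGroup N] [Module S N] [Module.Finite S N],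
      (∀ x ∈ l, ∀ n : N, x • n = 0) → Mem (omn rs.length W) N)
    [Module.Finite S N] (hN : ∀ x ∈ l, Fac W N x) (hrs : ∀ x ∈ rs, Fac W N x)
    (hreg : RingTheory.Sequence.IsWeaklyRegular N rs) : Mem W N := by
  have h1 : ∀ (N : Type u) [AddCommGroup N] [Module S N] [Module.Finite S N],
      Mem (omn rs.length (brk W l)) N := by
    intro N _ _ _
    exact brk_omn hW l rs.length (kill_brk (omn_resolving hW rs.length) l []
      (fun N _ _ _ _ h2 => h N h2) N (by simp))
  have h2 := reg_brk (brk_resolving hW l) rs h1 N hreg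
  exact peel hW l (peel (brk_resolving hW l) rs h2
    (fun x hx => (hrs x hx).mono (subset_brk hW l))) hN

end PartB2

section PartA

set_option linter.unusedSectionVars false

variable {S : Type u} [CommRing S]
variable {A B C A' B' M N X Y F F' K P : Type u}
  [AddCommGroup A] [Module S A] [AddCommGroup B] [Module S B] [AddCommGroup C] [Module S C]
  [AddCommGroup A'] [Module S A'] [AddCommGroup B'] [Module S B']
  [AddCommGroup M] [Module S M] [AddCommGroup N] [Module S N]
  [AddCommGroup X] [Module S X] [AddCommGroup Y] [Module S Y]
  [AddCommGroup F] [Module S F] [AddCommGroup F'] [Module S F']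
  [AddCommGroup K] [Module S K] [AddCommGroup P] [Module S P]

open Abelian

/-- the short complex of a short exact sequence -/
def sc {f : A →ₗ[S] B} {g : B →ₗ[S] C} (h : IsSES f g) : ShortComplex (ModuleCat.{u} S) :=
  ShortComplex.mk (ModuleCat.ofHom f) (ModuleCat.ofHom g) (by ext a; exact h.apply a)

lemma sc_exact {f : A →ₗ[S] B} {g : B →ₗ[S] C} (h : IsSES f g) : (sc h).ShortExact := by
  refine ShortComplex.ShortExact.mk' ?_ ?_ ?_
  · rw [ShortComplex.moduleCat_exact_iff]
    exact fun b hb => h.lift b hb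
  · rw [ModuleCat.mono_iff_injective]; exact h.1
  · rw [ModuleCat.epi_iff_surjective]; exact h.2.1

/-- vanishing of Ext -/
def EV (N M : Type u) [AddCommGroup N] [Module S N] [AddCommGroup M] [Module S M] (i : ℕ) : Prop :=
  Subsingleton (Ext (ModuleCat.of S N) (ModuleCat.of S M) i)

lemma ev_of_forall {i : ℕ} (h : ∀ e : Ext (ModuleCat.of S N) (ModuleCat.of S M) i, e = 0) :
    EV (S := S) N M i := ⟨fun a b => (h a).trans (h b).symm⟩

lemma ev_zero {i : ℕ} (h : EV (S := S) N M i)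
    (e : Ext (ModuleCat.of S N) (ModuleCat.of S M) i) : e = 0 := h.elim _ _

lemma ev_mid {f : A →ₗ[S] B} {g : B →ₗ[S] C} (h : IsSES f g) {i : ℕ} (hA : EV (S := S) N A i)
    (hC : EV (S := S) N C i) : EV (S := S) N B i := by
  apply ev_of_forall
  intro e
  obtain ⟨x, hx⟩ := Ext.covariant_sequence_exact₂ (ModuleCat.of S N) (sc_exact h) e
    (ev_zero hC _)
  rw [← hx, show x = 0 from ev_zero hA x]
  simp
  rfl

lemma ev_left {f : A →ₗ[S] B} {g : B →ₗ[S] C} (h : IsSES f g) {i : ℕ}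
    (hB : EV (S := S) N B (i+1)) (hC : EV (S := S) N C i) : EV (S := S) N A (i+1) := by
  apply ev_of_forall
  intro e
  obtain ⟨x, hx⟩ := Ext.covariant_sequence_exact₁ (ModuleCat.of S N) (sc_exact h) e
    (ev_zero hB _) rfl
  rw [← hx, show x = 0 from ev_zero hC x]
  simp
  rfl

lemma ev_left0 {f : A →ₗ[S] B} (h : Function.Injective f)
    (hB : EV (S := S) N B 0) : EV (S := S) N A 0 := by
  apply ev_of_forall
  intro e
  have : Mono (ModuleCat.ofHom f) := by rw [ModuleCat.mono_iff_injective]; exact h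
  apply Ext.postcomp_mk₀_injective_of_mono (ModuleCat.of S N) (ModuleCat.ofHom f)
  exact hB.elim _ _

lemma ev_right {f : A →ₗ[S] B} {g : B →ₗ[S] C} (h : IsSES f g) {i : ℕ}
    (hB : EV (S := S) N B i) (hA : EV (S := S) N A (i+1)) : EV (S := S) N C i := by
  apply ev_of_forall
  intro e
  obtain ⟨x, hx⟩ := Ext.covariant_sequence_exact₃ (ModuleCat.of S N) (sc_exact h) e rfl
    (ev_zero hA _)
  rw [← hx, show x = 0 from ev_zero hB x]
  simp
  rfl

lemma ev_retract {i : ℕ} (b : M →ₗ[S] X) (a : X →ₗ[S] M) (h : ∀ m, a (b m) = m)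
    (hX : EV (S := S) N X i) : EV (S := S) N M i := by
  apply ev_of_forall
  intro e
  have h1 : ModuleCat.ofHom b ≫ ModuleCat.ofHom a = 𝟙 (ModuleCat.of S M) := by
    ext m; exact h m
  have h2 : (e.comp (Ext.mk₀ (ModuleCat.ofHom b)) (add_zero i)).comp
      (Ext.mk₀ (ModuleCat.ofHom a)) (add_zero i) = e := by
    rw [Ext.comp_assoc_of_third_deg_zero, Ext.mk₀_comp_mk₀, h1, Ext.comp_mk₀_id]
  rw [← h2, ev_zero hX (e.comp (Ext.mk₀ (ModuleCat.ofHom b)) (add_zero i))]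
  simp

lemma ext_smul_zero {i : ℕ} {x : S} (hx : ∀ n : N, x • n = 0)
    (e : Ext (ModuleCat.of S N) (ModuleCat.of S M) i) : x • e = 0 := by
  have h1 : x • 𝟙 (ModuleCat.of S N) = 0 := by
    ext n; exact hx n
  have : x • e = (Ext.mk₀ (x • 𝟙 (ModuleCat.of S N))).comp e (zero_add i) := by
    simp [Ext.mk₀_smul]
  rw [this, h1]; simp

/-- the map `a ↦ (x_j a)_j` -/
def diagMap {m : ℕ} (x : Fin m → S) (A : Type u) [AddCommGroup A] [Module S A] :
    A →ₗ[S] (Fin m → A) := LinearMap.pi fun j => x j • LinearMap.id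

lemma diagMap_eq {m : ℕ} (x : Fin m → S) : diagMap x A =
    ∑ j, x j • LinearMap.single S (fun _ : Fin m => A) j := by
  classical
  ext a j
  simp [diagMap, Finset.sum_apply, Pi.single_apply]

lemma ext_diag {m : ℕ} (x : Fin m → S) (hx : ∀ j, ∀ n : N, x j • n = 0) {i : ℕ}
    {f : A →ₗ[S] B} (w : Fin m → (A →ₗ[S] B)) (hf : f = ∑ j, x j • w j)
    (e : Ext (ModuleCat.of S N) (ModuleCat.of S A) i) :
    e.comp (Ext.mk₀ (ModuleCat.ofHom f)) (add_zero i) = 0 := by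
  classical
  have h1 : ModuleCat.ofHom f = ∑ j, x j • ModuleCat.ofHom (w j) := by
    rw [hf]
    ext a
    simp
  have h2 : Ext.mk₀ (ModuleCat.ofHom f) = ∑ j, x j • Ext.mk₀ (ModuleCat.ofHom (w j)) := by
    rw [h1]
    simp only [← Ext.mk₀_smul]
    exact map_sum (Ext.addEquiv₀.symm) _ _
  rw [h2, Ext.comp_sum]
  refine Finset.sum_eq_zero fun j _ => ?_
  rw [Ext.comp_smul, ← Ext.smul_comp, ext_smul_zero (hx j), Ext.zero_comp]

lemma ev_diag {m : ℕ} (x : Fin m → S) (hx : ∀ j, ∀ n : N, x j • n = 0)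
    {f : A →ₗ[S] B} (w : Fin m → (A →ₗ[S] B)) (hf : f = ∑ j, x j • w j)
    {g : B →ₗ[S] C} (h : IsSES f g) {i : ℕ}
    (hC : EV (S := S) N C i) : EV (S := S) N A (i+1) := by
  apply ev_of_forall
  intro e
  obtain ⟨z, hz⟩ := Ext.covariant_sequence_exact₁ (ModuleCat.of S N) (sc_exact h) e
    (ext_diag x hx w hf e) rfl
  rw [← hz, show z = 0 from ev_zero hC z]
  simp
  rfl

lemma ev_diag0 {m : ℕ} (x : Fin m → S) (hx : ∀ j, ∀ n : N, x j • n = 0)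
    {f : A →ₗ[S] B} (w : Fin m → (A →ₗ[S] B)) (hf : f = ∑ j, x j • w j)
    (h : Function.Injective f) : EV (S := S) N A 0 := by
  apply ev_of_forall
  intro e
  have : Mono (ModuleCat.ofHom f) := by rw [ModuleCat.mono_iff_injective]; exact h
  apply Ext.postcomp_mk₀_injective_of_mono (ModuleCat.of S N) (ModuleCat.ofHom f)
  simpa using ext_diag x hx w hf e

set_option maxHeartbeats 1000000 in
lemma ev_contra [IsNoetherianRing S] [IsLocalRing S] [Module.Finite S N] [Module.Finite S M]
    {x : S} (hx : x ∈ IsLocalRing.maximalIdeal S) (hreg : IsSMulRegular N x) {i : ℕ}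
    (h : EV (S := S) (QuotSMulTop x N) M (i+1)) : EV (S := S) N M i := by
  have hS : (ModuleCat.smulShortComplex (ModuleCat.of S N) x).ShortExact :=
    IsSMulRegular.smulShortComplex_shortExact (M := ModuleCat.of S N) hreg
  have fin : Module.Finite S (Ext (ModuleCat.of S N) (ModuleCat.of S M) i) := by
    infer_instance
  by_contra ntr
  have : Nontrivial (Ext (ModuleCat.of S N) (ModuleCat.of S M) i) :=
    not_subsingleton_iff_nontrivial.1 ntr
  have hj : x ∈ (Module.annihilator S (Ext (ModuleCat.of S N) (ModuleCat.of S M) i)).jacobson :=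
    (IsLocalRing.maximalIdeal_le_jacobson _) hx
  apply Submodule.top_ne_pointwise_smul_of_mem_jacobson_annihilator hj
  rw [eq_comm, eq_top_iff]
  intro y hy
  obtain ⟨z, hz⟩ := Ext.contravariant_sequence_exact₁ hS (ModuleCat.of S M) y (add_comm 1 i) (h.elim _ _)
  obtain ⟨z, hz1⟩ : ∃ z : Ext (ModuleCat.of S N) (ModuleCat.of S M) i,
    (Ext.mk₀ (x • 𝟙 (ModuleCat.of S N))).comp z (zero_add i) = y := ⟨z, hz⟩
  rw [Ext.mk₀_smul, Ext.smul_comp, Ext.mk₀_id_comp] at hz1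
  rw [← hz1]
  exact Submodule.smul_mem_pointwise_smul _ _ ⊤ trivial

end PartA

section PartA2

set_option linter.unusedSectionVars false

variable {S : Type u} [CommRing S]
variable {A B C A' B' M N X Y F F' K P : Type u}
  [AddCommGroup A] [Module S A] [AddCommGroup B] [Module S B] [AddCommGroup C] [Module S C]
  [AddCommGroup A'] [Module S A'] [AddCommGroup B'] [Module S B']
  [AddCommGroup M] [Module S M] [AddCommGroup N] [Module S N]
  [AddCommGroup X] [Module S X] [AddCommGroup Y] [Module S Y]
  [AddCommGroup F] [Module S F] [AddCommGroup F'] [Module S F']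
  [AddCommGroup K] [Module S K] [AddCommGroup P] [Module S P]

open Abelian RingTheory.Sequence

lemma wr_of_subsingleton (R' : Type u) [CommRing R'] (rs : List R') : ∀ (M : Type u) [AddCommGroup M] [Module R' M]
    [Subsingleton M], IsWeaklyRegular M rs := by
  induction rs with
  | nil => intro M _ _ _; exact IsWeaklyRegular.nil _ _
  | cons r rs ih =>
    intro M _ _ hM
    rw [isWeaklyRegular_cons_iff]
    refine ⟨fun a b _ => Subsingleton.elim _ _, ?_⟩
    have : Subsingleton (QuotSMulTop r M) := inferInstanceAs (Subsingleton (M ⧸ _))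
    exact ih _

lemma le_depthE_iff (n : ℕ) (I : Ideal S) : (n : ℕ∞) ≤ depthE S I M ↔
    ∃ rs : List S, rs.length = n ∧ (∀ r ∈ rs, r ∈ I) ∧ IsWeaklyRegular M rs := by
  constructor
  · intro h
    rcases n with _ | k
    · exact ⟨[], rfl, by simp, IsWeaklyRegular.nil _ _⟩
    · have hlt : (k : ℕ∞) < depthE S I M := lt_of_lt_of_le (by exact_mod_cast Nat.lt_succ_self k) h
      obtain ⟨x, ⟨rs, h1, h2, rfl⟩, hk⟩ := lt_sSup_iff.1 hlt
      have hk' : k < rs.length := by exact_mod_cast hk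
      refine ⟨rs.take (k+1), by simp; omega, fun r hr => h1 r (List.mem_of_mem_take hr), ?_⟩
      rw [← List.take_append_drop (k+1) rs, isWeaklyRegular_append_iff] at h2
      exact h2.1
  · rintro ⟨rs, rfl, h1, h2⟩
    exact le_sSup ⟨rs, h1, h2, rfl⟩

variable [IsLocalRing S] [IsNoetherianRing S]

lemma smul_top_lt {I : Ideal S} (hI : I ≤ IsLocalRing.maximalIdeal S) [Module.Finite S M]
    [Nontrivial M] : I • (⊤ : Submodule S M) < ⊤ := by
  rw [lt_top_iff_ne_top]
  exact (Submodule.top_ne_ideal_smul_of_le_jacobson_annihilator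
    (hI.trans (IsLocalRing.maximalIdeal_le_jacobson _))).symm

lemma ev_of_subsingleton [Subsingleton M] (i : ℕ) : EV (S := S) N M i := by
  have h : 𝟙 (ModuleCat.of S M) = 0 := by ext x; exact Subsingleton.elim _ _
  apply ev_of_forall
  intro e
  rw [← Ext.comp_mk₀_id e, h, Ext.mk₀_zero, Ext.comp_zero]

lemma rees1 {I : Ideal S} (hI : I ≤ IsLocalRing.maximalIdeal S) [Module.Finite S M]
    [Module.Finite S N] (hN : Module.support S N ⊆ PrimeSpectrum.zeroLocus I) {rs : List S}
    (h1 : ∀ r ∈ rs, r ∈ I) (h2 : IsWeaklyRegular M rs) {i : ℕ} (hi : i < rs.length) :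
    EV (S := S) N M i := by
  rcases subsingleton_or_nontrivial M with h | h
  · exact ev_of_subsingleton i
  · exact ModuleCat.subsingleton_ext_of_exists_isRegular I (ModuleCat.of S N) hN (ModuleCat.of S M)
      (smul_top_lt hI) rs h1
      (IsRegular.of_isWeaklyRegular_of_mem_maximalIdeal _ (fun r hr => hI (h1 r hr)) h2) i hi

lemma rees2 {I : Ideal S} (hI : I ≤ IsLocalRing.maximalIdeal S) [Module.Finite S M]
    [Module.Finite S N] (hN : Module.support S N = PrimeSpectrum.zeroLocus I) {n : ℕ}
    (h : ∀ i < n, EV (S := S) N M i) : ∃ rs : List S, rs.length = n ∧ (∀ r ∈ rs, r ∈ I) ∧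
    IsWeaklyRegular M rs := by
  rcases subsingleton_or_nontrivial M with hs | hs
  · exact ⟨List.replicate n 0, by simp, fun r hr => by
      rw [List.eq_of_mem_replicate hr]; exact I.zero_mem, wr_of_subsingleton _ _ _⟩
  · have hNn : Nontrivial N := by
      by_contra hc
      rw [not_nontrivial_iff_subsingleton] at hc
      have : (⟨IsLocalRing.maximalIdeal S, inferInstance⟩ : PrimeSpectrum S) ∈
        PrimeSpectrum.zeroLocus (I : Set S) := hI
      rw [← hN, Module.support_eq_empty] at this
      exact this
    obtain ⟨rs, h1, h2, h3⟩ := ModuleCat.exists_isRegular_of_exists_subsingleton_ext I n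
      (ModuleCat.of S M) (smul_top_lt hI) (ModuleCat.of S N) hN h
    exact ⟨rs, h1, h2, h3.1⟩

/-- the residue field as a quotient module -/
noncomputable def kEquiv (S : Type u) [CommRing S] [IsLocalRing S] :
    (S ⧸ IsLocalRing.maximalIdeal S) ≃ₗ[S] IsLocalRing.ResidueField S :=
  (Submodule.quotEquivOfEq _ _ (by
    ext x
    rw [LinearMap.mem_ker, Algebra.linearMap_apply, IsLocalRing.ResidueField.algebraMap_eq,
      IsLocalRing.residue_eq_zero_iff])).trans
  (LinearMap.quotKerEquivOfSurjective (Algebra.linearMap S (IsLocalRing.ResidueField S))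
    IsLocalRing.residue_surjective)

lemma supp_quot {S : Type u} [CommRing S] (I : Ideal S) : Module.support S (S ⧸ I) =
    PrimeSpectrum.zeroLocus I := by
  rw [Module.support_eq_zeroLocus, Ideal.annihilator_quotient]

lemma supp_k : Module.support S (IsLocalRing.ResidueField S) =
    PrimeSpectrum.zeroLocus (IsLocalRing.maximalIdeal S) := by
  rw [← (kEquiv S).support_eq, supp_quot]

lemma fin_k : Module.Finite S (IsLocalRing.ResidueField S) :=
  Module.Finite.equiv (kEquiv S)

/-- depth at least `n` over a local ring -/
def DG (S : Type u) [CommRing S] [IsLocalRing S] (n : ℕ) (M : Type u) [AddCommGroup M] [Module S M] : Prop :=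
  (n : ℕ∞) ≤ depthE S (IsLocalRing.maximalIdeal S) M

lemma dg_iff {n : ℕ} [Module.Finite S M] : DG S n M ↔
    ∀ i < n, EV (S := S) (IsLocalRing.ResidueField S) M i := by
  have := fin_k (S := S)
  rw [DG, le_depthE_iff]
  constructor
  · rintro ⟨rs, rfl, h1, h2⟩ i hi
    exact rees1 le_rfl supp_k.le h1 h2 hi
  · exact fun h => rees2 le_rfl supp_k h

lemma dg_mid {f : A →ₗ[S] B} {g : B →ₗ[S] C} [Module.Finite S A] [Module.Finite S B]
    [Module.Finite S C] (h : IsSES f g) {n : ℕ} (hA : DG S n A) (hC : DG S n C) : DG S n B := by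
  rw [dg_iff] at *
  exact fun i hi => ev_mid h (hA i hi) (hC i hi)

lemma dg_left {f : A →ₗ[S] B} {g : B →ₗ[S] C} [Module.Finite S A] [Module.Finite S B]
    [Module.Finite S C] (h : IsSES f g) {n : ℕ} (hB : DG S (n+1) B) (hC : DG S n C) :
    DG S (n+1) A := by
  rw [dg_iff] at *
  rintro (_ | i) hi
  · exact ev_left0 h.1 (hB 0 hi)
  · exact ev_left h (hB _ hi) (hC i (by omega))

lemma dg_right {f : A →ₗ[S] B} {g : B →ₗ[S] C} [Module.Finite S A] [Module.Finite S B]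
    [Module.Finite S C] (h : IsSES f g) {n : ℕ} (hB : DG S n B) (hA : DG S (n+1) A) :
    DG S n C := by
  rw [dg_iff] at *
  exact fun i hi => ev_right h (hB i hi) (hA _ (by omega))

lemma dg_retract (b : M →ₗ[S] X) (a : X →ₗ[S] M) (h : ∀ m, a (b m) = m) [Module.Finite S M]
    [Module.Finite S X] {n : ℕ} (hX : DG S n X) : DG S n M := by
  rw [dg_iff] at *
  exact fun i hi => ev_retract b a h (hX i hi)

lemma dg_subsingleton [Subsingleton M] (n : ℕ) : DG S n M := by
  rw [DG, le_depthE_iff]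
  exact ⟨List.replicate n 0, by simp, fun r hr => by
      rw [List.eq_of_mem_replicate hr]; exact zero_mem _, wr_of_subsingleton _ _ _⟩

lemma dg_zero : DG S 0 M := by simp [DG]

lemma dg_le {m n : ℕ} (h : m ≤ n) (hn : DG S n M) : DG S m M :=
  le_trans (by exact_mod_cast h) hn

lemma dg_pi [Module.Finite S A] {n : ℕ} (h : DG S n A) (m : ℕ) : DG S n (Fin m → A) := by
  induction m with
  | zero => exact dg_subsingleton n
  | succ m ih =>
    have : IsSES (LinearMap.inl S A (Fin m → A)) (LinearMap.snd S A (Fin m → A)) := ses_inl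
    have h1 : DG S n (A × (Fin m → A)) := dg_mid this h ih
    let e := Fin.consLinearEquiv S (fun _ : Fin (m+1) => A)
    exact dg_retract e.symm.toLinearMap e.toLinearMap (fun x => e.apply_symm_apply x) h1

lemma k_kill {x : S} (hx : x ∈ IsLocalRing.maximalIdeal S) (n : IsLocalRing.ResidueField S) :
    x • n = 0 := by
  rw [Algebra.smul_def, IsLocalRing.ResidueField.algebraMap_eq,
    (IsLocalRing.residue_eq_zero_iff x).2 hx, zero_mul]

lemma dg_diag {m : ℕ} (x : Fin m → S) (hx : ∀ j, x j ∈ IsLocalRing.maximalIdeal S)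
    {f : A →ₗ[S] B} (w : Fin m → (A →ₗ[S] B)) (hf : f = ∑ j, x j • w j)
    {g : B →ₗ[S] C} (h : IsSES f g) [Module.Finite S A]
    [Module.Finite S C] {n : ℕ} (hC : DG S n C) : DG S (n+1) A := by
  rw [dg_iff] at *
  rintro (_ | i) hi
  · exact ev_diag0 x (fun j => k_kill (hx j)) w hf h.1
  · exact ev_diag x (fun j => k_kill (hx j)) w hf h (hC i (by omega))

end PartA2

section PartA3

set_option linter.unusedSectionVars false

open Abelian RingTheory.Sequence
open scoped Pointwise

lemma wr_unit {S : Type u} [CommRing S] : ∀ (rs rs' : List S) (M : Type u) [AddCommGroup M]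
    [Module S M], List.Forall₂ (fun r r' : S => ∃ v : Sˣ, r' = (v : S) * r) rs rs' →
    IsWeaklyRegular M rs → IsWeaklyRegular M rs' := by
  intro rs
  induction rs with
  | nil => intro rs' M _ _ h _; cases h; exact IsWeaklyRegular.nil _ _
  | cons r rs ih =>
    intro rs' M _ _ h hr
    cases h with
    | cons h1 h2 =>
      obtain ⟨v, rfl⟩ := h1
      rw [isWeaklyRegular_cons_iff] at *
      refine ⟨?_, ?_⟩
      · intro a b hab
        apply hr.1
        have : (v : S) • (r • a) = (v : S) • (r • b) := by simpa [mul_smul] using hab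
        exact smul_left_cancel v this
      · have he : (r • ⊤ : Submodule S M) = ((v * r : S) • ⊤ : Submodule S M) := by
          apply le_antisymm
          · rintro _ ⟨y, -, rfl⟩
            refine ⟨((v⁻¹ : Sˣ) : S) • y, trivial, ?_⟩
            change (v * r : S) • ((v⁻¹ : Sˣ) : S) • y = r • y
            rw [smul_smul, mul_comm (v : S) r, mul_assoc, Units.mul_inv, mul_one]
          · rintro _ ⟨y, -, rfl⟩
            refine ⟨(v : S) • y, trivial, ?_⟩
            change r • (v : S) • y = (v * r : S) • y
            rw [smul_smul, mul_comm]
        have e : QuotSMulTop r M ≃ₗ[S] QuotSMulTop (v * r : S) M :=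
          Submodule.quotEquivOfEq _ _ he
        exact (e.isWeaklyRegular_congr _).1 (ih _ _ h2 hr.2)

lemma dg_drop {S : Type u} [CommRing S] [IsLocalRing S] [IsNoetherianRing S] {M : Type u}
    [AddCommGroup M] [Module S M] [Module.Finite S M] (P : Ideal S) [hPp : P.IsPrime]
    (hP : ∀ Q : Ideal S, Q.IsPrime → P < Q → Q = IsLocalRing.maximalIdeal S)
    (hPm : P ≠ IsLocalRing.maximalIdeal S) {n : ℕ} (h : DG S (n+1) M) :
    ∃ rs : List S, rs.length = n ∧ (∀ r ∈ rs, r ∈ P) ∧ IsWeaklyRegular M rs := by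
  have hle : P ≤ IsLocalRing.maximalIdeal S := IsLocalRing.le_maximalIdeal hPp.ne_top
  obtain ⟨x, hx, hxP⟩ := SetLike.exists_of_lt (lt_of_le_of_ne hle hPm)
  have hreg : IsSMulRegular (S ⧸ P) x := by
    rw [isSMulRegular_iff_right_eq_zero_of_smul]
    intro a ha
    obtain ⟨a, rfl⟩ := Ideal.Quotient.mk_surjective a
    have : Ideal.Quotient.mk P (x * a) = 0 := ha
    rw [Ideal.Quotient.eq_zero_iff_mem] at this ⊢
    exact (hPp.mem_or_mem this).resolve_left hxP
  have hsupp : Module.support S (QuotSMulTop x (S ⧸ P)) ⊆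
      PrimeSpectrum.zeroLocus (IsLocalRing.maximalIdeal S) := by
    rw [Module.support_quotSMulTop, supp_quot]
    rintro Q ⟨h1, h2⟩
    have h2 : x ∈ Q.asIdeal := by simpa using h2
    have h1 : P ≤ Q.asIdeal := h1
    have := hP Q.asIdeal Q.2 (lt_of_le_of_ne h1 (fun hh => hxP (hh ▸ h2)))
    change IsLocalRing.maximalIdeal S ≤ Q.asIdeal
    rw [this]
  obtain ⟨rs, h1, h2, h3⟩ := (le_depthE_iff (n+1) _).1 h
  apply rees2 (N := S ⧸ P) hle (supp_quot P)
  intro i hi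
  exact ev_contra hx hreg (rees1 le_rfl hsupp h2 h3 (by omega))

variable {R : Type u} [CommRing R]

/-- local ring -/
abbrev Rp (p : PrimeSpectrum R) : Type u := Localization.AtPrime p.asIdeal
/-- localized module -/
abbrev Lp (p : PrimeSpectrum R) (M : Type u) [AddCommGroup M] [Module R M] : Type u :=
  LocalizedModule p.asIdeal.primeCompl M

/-- localized map -/
noncomputable abbrev Lmap (p : PrimeSpectrum R) {M N : Type u} [AddCommGroup M] [Module R M]
    [AddCommGroup N] [Module R N] : (M →ₗ[R] N) →ₗ[R] Lp p M →ₗ[Rp p] Lp p N :=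
  LocalizedModule.map p.asIdeal.primeCompl

/-- depth of the localization at least `n` -/
def ND (p : PrimeSpectrum R) (n : ℕ) (M : Type u) [AddCommGroup M] [Module R M] : Prop :=
  DG (Rp p) n (Lp p M)

variable {A B C M N X Y : Type u}
  [AddCommGroup A] [Module R A] [AddCommGroup B] [Module R B] [AddCommGroup C] [Module R C]
  [AddCommGroup M] [Module R M] [AddCommGroup N] [Module R N]
  [AddCommGroup X] [Module R X] [AddCommGroup Y] [Module R Y]

lemma loc_ses (p : PrimeSpectrum R) {f : A →ₗ[R] B} {g : B →ₗ[R] C} (h : IsSES f g) :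
    IsSES (Lmap p f) (Lmap p g) := by
  refine ⟨LocalizedModule.map_injective _ _ h.1, LocalizedModule.map_surjective _ _ h.2.1, ?_⟩
  have hex : Function.Exact f g := by rw [LinearMap.exact_iff]; exact h.2.2.symm
  have := LocalizedModule.map_exact p.asIdeal.primeCompl f g hex
  ext x
  rw [LinearMap.mem_range, LinearMap.mem_ker]
  exact (this x).symm

lemma Lmap_mk (p : PrimeSpectrum R) (f : M →ₗ[R] N) (m : M) (s : p.asIdeal.primeCompl) :
    Lmap p f (LocalizedModule.mk m s) = LocalizedModule.mk (f m) s :=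
  LocalizedModule.map_mk ..

variable [IsNoetherianRing R]

lemma nd_mid {p : PrimeSpectrum R} {f : A →ₗ[R] B} {g : B →ₗ[R] C} [Module.Finite R A]
    [Module.Finite R B] [Module.Finite R C] (h : IsSES f g) {n : ℕ} (hA : ND p n A)
    (hC : ND p n C) : ND p n B := dg_mid (loc_ses p h) hA hC

lemma nd_left {p : PrimeSpectrum R} {f : A →ₗ[R] B} {g : B →ₗ[R] C} [Module.Finite R A]
    [Module.Finite R B] [Module.Finite R C] (h : IsSES f g) {n : ℕ} (hB : ND p (n+1) B)
    (hC : ND p n C) : ND p (n+1) A := dg_left (loc_ses p h) hB hC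

lemma nd_right {p : PrimeSpectrum R} {f : A →ₗ[R] B} {g : B →ₗ[R] C} [Module.Finite R A]
    [Module.Finite R B] [Module.Finite R C] (h : IsSES f g) {n : ℕ} (hB : ND p n B)
    (hA : ND p (n+1) A) : ND p n C := dg_right (loc_ses p h) hB hA

lemma nd_retract {p : PrimeSpectrum R} (b : M →ₗ[R] X) (a : X →ₗ[R] M) (h : ∀ m, a (b m) = m)
    [Module.Finite R M] [Module.Finite R X] {n : ℕ} (hX : ND p n X) : ND p n M := by
  refine dg_retract (Lmap p b) (Lmap p a) (fun m => ?_) hX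
  induction m using LocalizedModule.induction_on with
  | h m s => rw [Lmap_mk, Lmap_mk, h]

lemma nd_iso {p : PrimeSpectrum R} (e : M ≃ₗ[R] X) [Module.Finite R M] [Module.Finite R X]
    {n : ℕ} (hX : ND p n X) : ND p n M :=
  nd_retract e.toLinearMap e.symm.toLinearMap (fun m => e.symm_apply_apply m) hX

lemma nd_of_kill {p : PrimeSpectrum R} {s : R} (hs : s ∉ p.asIdeal) (h : ∀ m : M, s • m = 0)
    (n : ℕ) : ND p n M := by
  have : Subsingleton (Lp p M) := by
    refine ⟨fun a b => ?_⟩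
    induction a using LocalizedModule.induction_on with
    | h a s1 =>
    induction b using LocalizedModule.induction_on with
    | h b s2 =>
      rw [LocalizedModule.mk_eq]
      refine ⟨⟨s, hs⟩, ?_⟩
      change s • (_ : M) = s • (_ : M)
      rw [h, h]
  exact dg_subsingleton n

lemma nd_zero {p : PrimeSpectrum R} : ND p 0 M := dg_zero

lemma nd_le {p : PrimeSpectrum R} {m n : ℕ} (h : m ≤ n) (hn : ND p n M) : ND p m M := dg_le h hn

lemma nd_pi {p : PrimeSpectrum R} [Module.Finite R A] {n : ℕ} (h : ND p n A) (m : ℕ) :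
    ND p n (Fin m → A) := by
  induction m with
  | zero => exact nd_of_kill (s := 1) p.2.one_notMem (fun _ => Subsingleton.elim _ _) n
  | succ m ih =>
    have : IsSES (LinearMap.inl R A (Fin m → A)) (LinearMap.snd R A (Fin m → A)) := ses_inl
    exact nd_iso (Fin.consLinearEquiv R (fun _ : Fin (m+1) => A)).symm (nd_mid this h ih)

lemma nd_diag {p : PrimeSpectrum R} {m : ℕ} (x : Fin m → R) (hx : ∀ j, x j ∈ p.asIdeal)
    {f : A →ₗ[R] B} (w : Fin m → (A →ₗ[R] B)) (hf : f = ∑ j, x j • w j)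
    {g : B →ₗ[R] C} (h : IsSES f g) [Module.Finite R A]
    [Module.Finite R C] {n : ℕ} (hC : ND p n C) : ND p (n+1) A := by
  refine dg_diag (fun j => algebraMap R (Rp p) (x j)) (fun j => ?_) (fun j => Lmap p (w j)) ?_
    (loc_ses p h) hC
  · rw [← Localization.AtPrime.map_eq_maximalIdeal]
    exact Ideal.mem_map_of_mem _ (hx j)
  · rw [hf, map_sum]
    refine Finset.sum_congr rfl fun j _ => ?_
    rw [map_smul]
    ext y
    rw [LinearMap.smul_apply, LinearMap.smul_apply, algebraMap_smul]

/-- height as a natural number -/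
noncomputable def htn (p : PrimeSpectrum R) : ℕ := (heightE R p).toNat

lemma htn_coe (p : PrimeSpectrum R) : (htn p : ℕ∞) = heightE R p := by
  apply ENat.natCast_toNat
  rw [heightE, ← PrimeSpectrum.height_eq_orderHeight]
  exact Ideal.height_ne_top_of_isPrime

lemma htn_lt {p q : PrimeSpectrum R} (h : p < q) : htn p < htn q := by
  have := Order.height_strictMono h (by
    rw [← heightE, ← htn_coe]; exact ENat.natCast_lt_top _)
  rw [← heightE, ← heightE, ← htn_coe, ← htn_coe] at this
  exact_mod_cast this

lemma htn_le {p q : PrimeSpectrum R} (h : p ≤ q) : htn p ≤ htn q := by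
  rcases h.eq_or_lt with rfl | h
  · exact le_rfl
  · exact (htn_lt h).le

/-- the localization of `R` as a module -/
noncomputable def LpR (p : PrimeSpectrum R) : Lp p R ≃ₗ[Rp p] Rp p :=
  (IsLocalizedModule.iso p.asIdeal.primeCompl (Algebra.linearMap R (Rp p))).extendScalarsOfIsLocalization
    p.asIdeal.primeCompl (Rp p)

lemma nd_R (hCM : ∀ p : PrimeSpectrum R, IsCMLocalRing (Localization.AtPrime p.asIdeal))
    (p : PrimeSpectrum R) {n : ℕ} : ND p n R ↔ n ≤ htn p := by
  have h1 : ND p n R ↔ DG (Rp p) n (Rp p) :=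
    ⟨fun h => dg_retract (LpR p).symm.toLinearMap (LpR p).toLinearMap (fun m => (LpR p).apply_symm_apply m) h,
     fun h => dg_retract (LpR p).toLinearMap (LpR p).symm.toLinearMap (fun m => (LpR p).symm_apply_apply m) h⟩
  rw [h1, DG]
  have h2 := (hCM p).2
  rw [IsLocalization.AtPrime.ringKrullDim_eq_height p.asIdeal,
    PrimeSpectrum.height_eq_orderHeight, ← heightE, ← htn_coe] at h2
  rw [WithBot.coe_eq_coe.1 h2]
  exact_mod_cast Iff.rfl

/-- codepth at most `c` at `p` -/
def Cod (p : PrimeSpectrum R) (c : ℕ) (M : Type u) [AddCommGroup M] [Module R M] : Prop :=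
  ND p (htn p - c) M

lemma nd_drop {p q : PrimeSpectrum R} (h : p ⋖ q) [Module.Finite R M] {n : ℕ}
    (hq : ND q (n+1) M) : ND p n M := by
  have hpq : p.asIdeal < q.asIdeal := h.1
  have hdis : Disjoint (q.asIdeal.primeCompl : Set R) p.asIdeal := by
    rw [Set.disjoint_left]
    intro x hx hx'
    exact hx (hpq.le hx')
  set P : Ideal (Rp q) := p.asIdeal.map (algebraMap R (Rp q)) with hPdef
  have hPp : P.IsPrime := IsLocalization.isPrime_of_isPrime_disjoint q.asIdeal.primeCompl _ _ p.2 hdis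
  have hPc : P.comap (algebraMap R (Rp q)) = p.asIdeal :=
    IsLocalization.under_map_of_isPrime_disjoint q.asIdeal.primeCompl _ p.2 hdis
  obtain ⟨rs, h1, h2, h3⟩ := dg_drop P (fun Q hQ hPQ => by
      have hQc : (Q.comap (algebraMap R (Rp q))).map (algebraMap R (Rp q)) = Q :=
        IsLocalization.map_under q.asIdeal.primeCompl _ Q
      rw [← hQc, ← Localization.AtPrime.map_eq_maximalIdeal]
      congr 1
      have hQ' : (Q.comap (algebraMap R (Rp q))).IsPrime := inferInstance
      have hle : Q.comap (algebraMap R (Rp q)) ≤ q.asIdeal := by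
        refine le_trans (Ideal.comap_mono (IsLocalRing.le_maximalIdeal hQ.ne_top)) ?_
        exact (Localization.AtPrime.under_maximalIdeal (I := q.asIdeal)).le
      have hlt : p.asIdeal < Q.comap (algebraMap R (Rp q)) := by
        refine lt_of_le_of_ne ?_ ?_
        · rw [← hPc]; exact Ideal.comap_mono hPQ.le
        · intro hh
          rw [← hQc, ← hh] at hPQ
          exact lt_irrefl _ hPQ
      by_contra hne
      exact h.2 (c := ⟨_, hQ'⟩) hlt (show Q.comap (algebraMap R (Rp q)) < q.asIdeal from lt_of_le_of_ne hle hne))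
    (fun hh => by
      have : P.comap (algebraMap R (Rp q)) = q.asIdeal := by
        rw [hh]; exact Localization.AtPrime.under_maximalIdeal (I := q.asIdeal)
      rw [hPc] at this
      exact hpq.ne this) hq
  have key : ∃ rs' : List R, (∀ r ∈ rs', r ∈ p.asIdeal) ∧ List.Forall₂
      (fun r r' : Rp q => ∃ v : (Rp q)ˣ, r' = (v : Rp q) * r) rs (rs'.map (algebraMap R (Rp q))) := by
    clear h1 h3
    induction rs with
    | nil => exact ⟨[], by simp, by simp⟩
    | cons r rs ih =>
      obtain ⟨rs', ha, hb⟩ := ih (fun r hr => h2 r (List.mem_cons_of_mem _ hr))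
      obtain ⟨⟨a, s⟩, hs⟩ := (IsLocalization.mem_map_algebraMap_iff q.asIdeal.primeCompl (Rp q)).1
        (h2 r List.mem_cons_self)
      refine ⟨a :: rs', ?_, ?_⟩
      · intro t ht
        rcases List.mem_cons.1 ht with rfl | ht
        · exact a.2
        · exact ha t ht
      · refine List.Forall₂.cons ⟨(IsLocalization.map_units (Rp q) s).unit, ?_⟩ hb
        rw [← hs, mul_comm]; rfl
  obtain ⟨rs', ha, hb⟩ := key
  have h4 := wr_unit _ _ _ hb h3
  have hlen : rs'.length = n := by
    have := hb.length_eq; simp at this; omega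
  have h5 : IsWeaklyRegular (Lp q M) rs' := (isWeaklyRegular_map_algebraMap_iff (Rp q) (Lp q M) rs').1 h4
  have hc : q.asIdeal.primeCompl ≤ p.asIdeal.primeCompl := fun x hx hx' => hx (hpq.le hx')
  have h6 := h5.of_isLocalizedModule (Rp p) p.asIdeal.primeCompl
    (LocalizedModule.liftOfLE q.asIdeal.primeCompl p.asIdeal.primeCompl hc (M := M))
  rw [ND, DG, le_depthE_iff]
  refine ⟨_, by simpa using hlen, ?_, h6⟩
  intro r hr
  obtain ⟨r', hr', rfl⟩ := List.mem_map.1 hr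
  rw [← Localization.AtPrime.map_eq_maximalIdeal]
  exact Ideal.mem_map_of_mem _ (ha _ hr')

lemma cod_down [Module.Finite R M] {c : ℕ} (p : PrimeSpectrum R) : ∀ (k : ℕ) (q : PrimeSpectrum R),
    htn q = k → p ≤ q → Cod q c M → Cod p c M := by
  intro k
  induction k using Nat.strong_induction_on with
  | _ k ih =>
    intro q hk hpq hq
    rcases hpq.eq_or_lt with rfl | hlt
    · exact hq
    obtain ⟨r, ⟨hr1, hr2⟩, hr3⟩ := WellFounded.has_min
      (InvImage.wf (fun r : PrimeSpectrum R => r.asIdeal)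
        (wellFounded_gt (α := Ideal R))) {r | p ≤ r ∧ r < q} ⟨p, le_rfl, hlt⟩
    have hcov : r ⋖ q := ⟨hr2, fun c hc1 hc2 => hr3 c ⟨hr1.trans hc1.le, hc2⟩ hc1⟩
    have hh := htn_lt hr2
    refine ih (htn r) (by omega) r rfl hr1 ?_
    unfold Cod at *
    rcases hn : htn q - c with _ | n
    · have : htn r - c = 0 := by omega
      rw [this]; exact nd_zero
    · rw [hn] at hq
      exact nd_le (by omega) (nd_drop hcov hq)

lemma Cod.down [Module.Finite R M] {c : ℕ} {p q : PrimeSpectrum R} (h : p ≤ q) (hq : Cod q c M) :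
    Cod p c M := cod_down p _ q rfl h hq

end PartA3

section PartC

set_option linter.unusedSectionVars false

variable {S : Type u} [CommRing S]
variable {A B C A' B' M N X Y F F' K P : Type u}
  [AddCommGroup A] [Module S A] [AddCommGroup B] [Module S B] [AddCommGroup C] [Module S C]
  [AddCommGroup A'] [Module S A'] [AddCommGroup B'] [Module S B']
  [AddCommGroup M] [Module S M] [AddCommGroup N] [Module S N]
  [AddCommGroup X] [Module S X] [AddCommGroup Y] [Module S Y]
  [AddCommGroup F] [Module S F] [AddCommGroup F'] [Module S F']
  [AddCommGroup K] [Module S K] [AddCommGroup P] [Module S P]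

open Abelian RingTheory.Sequence
open scoped Pointwise

lemma exact_ses {f : A →ₗ[S] B} {g : B →ₗ[S] C} (h1 : Function.Injective f)
    (h2 : Function.Surjective g) (h3 : Function.Exact f g) : IsSES f g :=
  ⟨h1, h2, (LinearMap.exact_iff.1 h3).symm⟩

lemma ker_of_om [IsNoetherianRing S] {W : Set (ModuleCat.{u} S)} (hW : IsResolving S W) {f : A →ₗ[S] B}
    {g : B →ₗ[S] C} (h : IsSES f g) (hB : Mem W B) (hC : Mem (om W) C) : Mem W A := by
  obtain ⟨P, π, h1, h2, hπ, hK⟩ := hC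
  obtain ⟨i, -, hi⟩ := pb_ses2 π h
  obtain ⟨j, -, hj⟩ := pb_ses1 g (ses_ker hπ)
  have hQ : Mem W (pb g π) := mem_ext hW hj hK hB
  exact mem_ker hW hi hQ (mem_proj hW P)

lemma mem_zero {W : Set (ModuleCat.{u} S)} (hW : IsResolving S W) [Subsingleton M] : Mem W M := by
  have : Module.Finite S M := ⟨⟨∅, Subsingleton.elim _ _⟩⟩
  exact mem_proj hW M

lemma smul_ses {r : S} (h : IsSMulRegular X r) :
    IsSES (r • (LinearMap.id : X →ₗ[S] X)) (Submodule.mkQ (r • (⊤ : Submodule S X))) := by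
  refine ⟨h, Submodule.mkQ_surjective _, ?_⟩
  rw [Submodule.ker_mkQ]
  ext y
  constructor
  · rintro ⟨z, rfl⟩
    exact ⟨z, trivial, rfl⟩
  · rintro ⟨z, -, rfl⟩
    exact ⟨z, rfl⟩

variable [IsLocalRing S] [IsNoetherianRing S]

lemma kill_mem {W : Set (ModuleCat.{u} S)} (hW : IsResolving S W)
    (hk : Mem W (IsLocalRing.ResidueField S)) (n : ℕ) [hN : Module.Finite S N]
    (h : ∀ x ∈ (IsLocalRing.maximalIdeal S)^n, ∀ y : N, x • y = 0) : Mem W N := by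
  revert h
  refine IsNoetherianRing.induction_on_isQuotientEquivQuotientPrime S hN
    (motive := fun N _ _ _ => (∀ x ∈ (IsLocalRing.maximalIdeal S)^n, ∀ y : N, x • y = 0) → Mem W N)
    ?_ ?_ ?_
  · intro N _ _ _ _ _; exact mem_zero hW
  · intro N _ _ _ p e h
    have hp : IsLocalRing.maximalIdeal S ≤ p.asIdeal := by
      apply p.2.le_of_pow_le (n := n)
      intro x hx
      have h1 := h x hx (e.symm 1)
      rw [← map_smul, LinearEquiv.map_eq_zero_iff] at h1
      rw [← Ideal.Quotient.eq_zero_iff_mem, ← h1]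
      change _ = x • Ideal.Quotient.mk p.asIdeal 1
      rw [← mul_one x, map_mul, mul_one]; rfl
    have hp' : p.asIdeal = IsLocalRing.maximalIdeal S :=
      le_antisymm (IsLocalRing.le_maximalIdeal p.2.ne_top) hp
    have e2 : N ≃ₗ[S] IsLocalRing.ResidueField S :=
      e.trans ((Submodule.quotEquivOfEq _ _ hp').trans (kEquiv S))
    exact mem_iso hW e2.symm hk
  · intro N1 _ _ _ N2 _ _ _ N3 _ _ _ f g hf hg hfg h1 h3 h
    refine mem_ext hW (exact_ses hf hg hfg) (h1 ?_) (h3 ?_)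
    · intro x hx y
      apply hf
      rw [map_smul, h x hx, map_zero]
    · intro x hx y
      obtain ⟨y, rfl⟩ := hg y
      rw [← map_smul, h x hx, map_zero]

lemma exists_gens (I : Ideal S) : ∃ l : List S, (∀ x ∈ l, x ∈ I) ∧ Ideal.ofList l = I := by
  obtain ⟨s, hs⟩ := (IsNoetherian.noetherian I : I.FG)
  refine ⟨s.toList, ?_, ?_⟩
  · intro x hx
    rw [← hs]
    exact Ideal.subset_span (by simpa using hx)
  · rw [← hs, Ideal.ofList]
    congr 1
    ext x; simp

lemma kill_of_gens {l : List S} (h : ∀ x ∈ l, ∀ n : N, x • n = 0) {x : S}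
    (hx : x ∈ Ideal.ofList l) (n : N) : x • n = 0 := by
  have : Ideal.ofList l ≤ Module.annihilator S N := by
    rw [Ideal.ofList, Ideal.span_le]
    intro y hy
    exact Module.mem_annihilator.2 (h y hy)
  exact Module.mem_annihilator.1 (this hx) n

theorem tl_local {W : Set (ModuleCat.{u} S)} (hW : IsResolving S W) {t : ℕ}
    (hk : Mem (omn t W) (IsLocalRing.ResidueField S)) [Module.Finite S N] (hN : DG S t N)
    (n : ℕ) (h : ∀ x ∈ (IsLocalRing.maximalIdeal S)^n, Fac W N x) : Mem W N := by
  by_cases htop : facI hW N = ⊤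
  · exact mem_of_facI_top hW htop
  have hle : facI hW N ≤ IsLocalRing.maximalIdeal S := IsLocalRing.le_maximalIdeal htop
  have hge : (IsLocalRing.maximalIdeal S)^n ≤ facI hW N := fun x hx => h x hx
  have hfin := fin_k (S := S)
  have hsupp : Module.support S (IsLocalRing.ResidueField S) =
      PrimeSpectrum.zeroLocus (facI hW N) := by
    rw [supp_k]
    apply le_antisymm
    · exact PrimeSpectrum.zeroLocus_anti_mono hle
    · intro Q hQ
      exact Q.2.le_of_pow_le (n := n) (hge.trans hQ)
  obtain ⟨rs, hlen, h1, h2⟩ := rees2 hle hsupp (dg_iff.1 hN)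
  obtain ⟨l, hl1, hl2⟩ := exists_gens (facI hW N)
  refine thmTL hW rs l ?_ (fun x hx => hl1 x hx) (fun x hx => h1 x hx) h2
  intro N' _ _ _ hN'
  rw [hlen]
  exact kill_mem (omn_resolving hW t) hk n
    (fun x hx y => kill_of_gens hN' (by rw [hl2]; exact hge hx) y)

lemma dg_smul {r : S} (hr : r ∈ IsLocalRing.maximalIdeal S) (h : IsSMulRegular X r)
    [Module.Finite S X] {n : ℕ} (hd : DG S n (QuotSMulTop r X)) : DG S (n+1) X := by
  refine dg_diag (m := 1) (fun _ => r) (fun _ => hr) (fun _ => LinearMap.id) (by simp)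
    (smul_ses h) hd

lemma reduce_depth (rs : List S) : ∀ (W : Set (ModuleCat.{u} S)) (_ : IsResolving S W)
    (X : Type u) [AddCommGroup X] [Module S X] (_ : Mem W X)
    (_ : ∀ r ∈ rs, r ∈ IsLocalRing.maximalIdeal S)
    (_ : IsWeaklyRegular X rs) (_ : ¬ DG S (rs.length + 1) X), ∃ X' : ModuleCat.{u} S,
      X' ∈ omn rs.length W ∧ ¬ DG S 1 X' := by
  induction rs with
  | nil => intro W hW X _ _ hX _ _ hd; exact ⟨ModuleCat.of S X, hX, hd⟩
  | cons r rs ih =>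
    intro W hW X _ _ hX hm hr hd
    rw [isWeaklyRegular_cons_iff] at hr
    have := mem_fin hW hX
    refine ih (om W) (om_resolving hW) (QuotSMulTop r X) (om_of_ses hW (smul_ses hr.1) hX hX)
      (fun x hx => hm x (List.mem_cons_of_mem _ hx)) hr.2 ?_
    intro hc
    exact hd (dg_smul (hm r List.mem_cons_self) hr.1 hc)

lemma k_embed [Module.Finite S X] (h : ¬ DG S 1 X) :
    ∃ f : IsLocalRing.ResidueField S →ₗ[S] X, Function.Injective f := by
  have hfin := fin_k (S := S)
  rw [dg_iff] at h
  push Not at h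
  obtain ⟨i, hi, h⟩ := h
  obtain rfl : i = 0 := by omega
  by_contra hc
  push Not at hc
  apply h
  apply ev_of_forall
  intro e
  obtain ⟨φ, rfl⟩ := (Ext.addEquiv₀ (X := ModuleCat.of S (IsLocalRing.ResidueField S))
    (Y := ModuleCat.of S X)).symm.surjective e
  rw [EmbeddingLike.map_eq_zero_iff]
  have h1 := hc φ.hom
  rw [injective_iff_map_eq_zero] at h1
  push Not at h1
  obtain ⟨a, ha, ha0⟩ := h1
  ext b
  obtain ⟨c, hc⟩ := IsLocalRing.residue_surjective (b / a)
  have : b = c • a := by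
    rw [Algebra.smul_def, IsLocalRing.ResidueField.algebraMap_eq, hc]
    field_simp
  rw [this, map_smul, ha, smul_zero]
  rfl

lemma c2_step {V : Set (ModuleCat.{u} S)} (hV : IsResolving S V) [Module.Finite S X]
    (hX : Mem V X) (hd : ¬ DG S 1 X) (hk : Mem (om V) (IsLocalRing.ResidueField S)) :
    Mem V (IsLocalRing.ResidueField S) := by
  obtain ⟨f, hf⟩ := k_embed hd
  have hses : IsSES f (LinearMap.range f).mkQ :=
    ⟨hf, Submodule.mkQ_surjective _, (Submodule.ker_mkQ _).symm⟩
  refine ker_of_om hV hses hX ?_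
  obtain ⟨l, hl1, hl2⟩ := exists_gens (IsLocalRing.maximalIdeal S)
  refine thmT0 (om_resolving hV) l ?_ ?_
  · intro N _ _ _ hN
    refine kill_mem (om_resolving hV) hk 1 (fun x hx y => kill_of_gens hN ?_ y)
    rw [hl2]; simpa using hx
  · intro x hx
    refine Fac.mk (le_om hV hX) ((LinearMap.range f).liftQ (x • LinearMap.id) ?_)
      (LinearMap.range f).mkQ ?_
    · rintro _ ⟨y, rfl⟩
      rw [LinearMap.mem_ker, LinearMap.smul_apply, LinearMap.id_apply, ← map_smul,
        k_kill (hl1 x hx), map_zero]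
    · intro m
      obtain ⟨m, rfl⟩ := Submodule.mkQ_surjective _ m
      rfl

theorem c2 {W : Set (ModuleCat.{u} S)} (hW : IsResolving S W) (hX : Mem W X) {t : ℕ}
    (h1 : DG S t X) (h2 : ¬ DG S (t+1) X) : ∀ n : ℕ,
    Mem (omn n W) (IsLocalRing.ResidueField S) → Mem (omn t W) (IsLocalRing.ResidueField S) := by
  obtain ⟨rs, hlen, hm, hr⟩ := (le_depthE_iff _ _).1 h1
  obtain ⟨X', hX', hd⟩ := reduce_depth rs W hW X hX hm hr (by rwa [hlen])
  rw [hlen] at hX'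
  intro n
  induction n with
  | zero => intro h; exact omn_le hW (Nat.zero_le t) h
  | succ n ih =>
    intro h
    rcases Nat.lt_or_ge n t with hn | hn
    · exact omn_le hW hn h
    · apply ih
      have hX2 : X' ∈ omn n W := omn_le hW hn hX'
      have := (omn_resolving hW n).fg _ hX2
      rw [omn_succ'] at h
      exact c2_step (omn_resolving hW n) (X := X') hX2 hd h

end PartC

section PartD

set_option linter.unusedSectionVars false
set_option linter.style.haveILetI false

variable {R : Type u} [CommRing R]
variable {A B C M N X Y : Type u}
  [AddCommGroup A] [Module R A] [AddCommGroup B] [Module R B] [AddCommGroup C] [Module R C]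
  [AddCommGroup M] [Module R M] [AddCommGroup N] [Module R N]
  [AddCommGroup X] [Module R X] [AddCommGroup Y] [Module R Y]

lemma retract_equiv (b : M →ₗ[R] X) (a : X →ₗ[R] M) (h : ∀ m, a (b m) = m) :
    Nonempty (X ≃ₗ[R] (M × LinearMap.ker a)) := by
  refine ⟨(LinearEquiv.ofBijective (b.coprod (LinearMap.ker a).subtype) ⟨?_, ?_⟩).symm⟩
  · rw [injective_iff_map_eq_zero]
    rintro ⟨m, k, hk⟩ h0
    simp only [LinearMap.coprod_apply, Submodule.subtype_apply] at h0
    have h1 := congrArg a h0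
    rw [map_add, h, map_zero, LinearMap.mem_ker.1 hk, add_zero] at h1
    subst h1
    simp only [map_zero, zero_add] at h0
    subst h0; rfl
  · intro x
    refine ⟨⟨a x, ⟨x - b (a x), ?_⟩⟩, ?_⟩
    · simp [h]
    · simp

/-- the category of retracts of localizations -/
def Wp (W : Set (ModuleCat.{u} R)) (p : PrimeSpectrum R) : Set (ModuleCat.{u} (Rp p)) :=
  {N | ∃ X : ModuleCat.{u} R, X ∈ W ∧ ∃ (b : N →ₗ[Rp p] Lp p X) (a : Lp p X →ₗ[Rp p] N),
    ∀ n, a (b n) = n}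

lemma Wp.mk {W : Set (ModuleCat.{u} R)} {p : PrimeSpectrum R} {N : Type u} [AddCommGroup N]
    [Module (Rp p) N] (h : Mem W X) (b : N →ₗ[Rp p] Lp p X) (a : Lp p X →ₗ[Rp p] N)
    (hab : ∀ n, a (b n) = n) : Mem (Wp W p) N := ⟨ModuleCat.of R X, h, b, a, hab⟩

lemma wp_retract {W : Set (ModuleCat.{u} R)} {p : PrimeSpectrum R} {N N' : Type u}
    [AddCommGroup N] [Module (Rp p) N] [AddCommGroup N'] [Module (Rp p) N']
    (h : Mem (Wp W p) N') (b : N →ₗ[Rp p] N') (a : N' →ₗ[Rp p] N)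
    (hab : ∀ n, a (b n) = n) : Mem (Wp W p) N := by
  obtain ⟨X, hX, d, c, hcd⟩ := h
  refine ⟨X, hX, d ∘ₗ b, a ∘ₗ c, fun n => ?_⟩
  change a (c (d (b n))) = n
  erw [hcd]; exact hab n

lemma wp_iso {W : Set (ModuleCat.{u} R)} {p : PrimeSpectrum R} {N N' : Type u}
    [AddCommGroup N] [Module (Rp p) N] [AddCommGroup N'] [Module (Rp p) N']
    (e : N' ≃ₗ[Rp p] N) (h : Mem (Wp W p) N') : Mem (Wp W p) N :=
  wp_retract h e.symm.toLinearMap e.toLinearMap (fun n => e.apply_symm_apply n)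

lemma wp_loc {W : Set (ModuleCat.{u} R)} (p : PrimeSpectrum R) (h : Mem W X) :
    Mem (Wp W p) (Lp p X) := Wp.mk h LinearMap.id LinearMap.id (fun _ => rfl)

lemma alg_unit {p : PrimeSpectrum R} {s : R} (hs : s ∉ p.asIdeal) :
    IsUnit (algebraMap R (Rp p) s) :=
  IsLocalization.map_units (Rp p) (⟨s, hs⟩ : p.asIdeal.primeCompl)

variable [IsNoetherianRing R]

lemma Fac.loc {W : Set (ModuleCat.{u} R)} (p : PrimeSpectrum R) {s : R} (h : Fac W M s) :
    Fac (Wp W p) (Lp p M) (algebraMap R (Rp p) s) := by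
  obtain ⟨X, b, a, hX, hab⟩ := h
  refine Fac.mk (wp_loc (X := X) p hX) (Lmap p b) (Lmap p a) (fun m => ?_)
  induction m using LocalizedModule.induction_on with
  | h m t => rw [Lmap_mk, Lmap_mk, hab, algebraMap_smul, LocalizedModule.smul'_mk]

lemma loc_of_fac {W : Set (ModuleCat.{u} R)} {p : PrimeSpectrum R} {s : R} (hs : s ∉ p.asIdeal)
    (h : Fac W M s) : Mem (Wp W p) (Lp p M) := by
  obtain ⟨X, b, a, hX, hab⟩ := h.loc p
  obtain ⟨u, hu⟩ := alg_unit hs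
  refine wp_retract (N' := X) hX b ((↑u⁻¹ : Rp p) • a) (fun m => ?_)
  rw [LinearMap.smul_apply, hab, ← hu, smul_smul, Units.inv_mul, one_smul]

lemma fac_of_loc {W : Set (ModuleCat.{u} R)} (hW : IsResolving R W) {p : PrimeSpectrum R}
    [Module.Finite R M] (h : Mem (Wp W p) (Lp p M)) : ∃ s ∉ p.asIdeal, Fac W M s := by
  obtain ⟨X, hX, b, a, hab⟩ := h
  have : Module.Finite R X := hW.fg X hX
  have : Module.FinitePresentation R M := Module.finitePresentation_of_finite R M
  have : Module.FinitePresentation R X := Module.finitePresentation_of_finite R X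
  obtain ⟨b0, s1, hb⟩ := Module.FinitePresentation.exists_lift_of_isLocalizedModule p.asIdeal.primeCompl
    (LocalizedModule.mkLinearMap p.asIdeal.primeCompl X)
    ((b.restrictScalars R) ∘ₗ (LocalizedModule.mkLinearMap p.asIdeal.primeCompl M))
  obtain ⟨a0, s2, ha⟩ := Module.FinitePresentation.exists_lift_of_isLocalizedModule p.asIdeal.primeCompl
    (LocalizedModule.mkLinearMap p.asIdeal.primeCompl M)
    ((a.restrictScalars R) ∘ₗ (LocalizedModule.mkLinearMap p.asIdeal.primeCompl X))
  have key : (LocalizedModule.mkLinearMap p.asIdeal.primeCompl M) ∘ₗ (a0 ∘ₗ b0) =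
      (LocalizedModule.mkLinearMap p.asIdeal.primeCompl M) ∘ₗ ((s1 * s2) • LinearMap.id) := by
    ext m
    have h1 := LinearMap.congr_fun ha (b0 m)
    have h2 := LinearMap.congr_fun hb m
    simp only [LinearMap.comp_apply, LinearMap.smul_apply, LinearMap.restrictScalars_apply] at h1 h2 ⊢
    rw [h1, h2]
    have h3 : a (s1 • b ((LocalizedModule.mkLinearMap p.asIdeal.primeCompl M) m)) =
      s1 • a (b ((LocalizedModule.mkLinearMap p.asIdeal.primeCompl M) m)) :=
      LinearMap.map_smul_of_tower (R := R) a (s1 : R) _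
    rw [h3]
    erw [hab]
    rw [LinearMap.id_apply, smul_smul, mul_comm s2 s1]
    exact (LinearMap.map_smul _ ((s1 * s2 : p.asIdeal.primeCompl) : R) m).symm
  obtain ⟨t, ht⟩ := Module.Finite.exists_smul_of_comp_eq_of_isLocalizedModule p.asIdeal.primeCompl
    (LocalizedModule.mkLinearMap p.asIdeal.primeCompl M) _ _ key
  refine ⟨(t * (s1 * s2) : p.asIdeal.primeCompl), (t * (s1 * s2)).2,
    Fac.mk (X := X) hX b0 ((t : R) • a0) (fun m => ?_)⟩
  have := LinearMap.congr_fun ht m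
  simp only [LinearMap.smul_apply, LinearMap.comp_apply, LinearMap.id_apply] at this
  rw [smul_smul] at this
  exact this

/-- submodules generating up to localization -/
lemma isLoc_sub {p : PrimeSpectrum R} {N : Type u} [AddCommGroup N] [Module (Rp p) N] [Module R N]
    [IsScalarTower R (Rp p) N] (N0 : Submodule R N)
    (h : ∀ n : N, ∃ s ∉ p.asIdeal, s • n ∈ N0) :
    IsLocalizedModule p.asIdeal.primeCompl N0.subtype where
  map_units s := by
    rw [Module.End.isUnit_iff]
    obtain ⟨u, hu⟩ := alg_unit s.2
    have h1 : ∀ n : N, (algebraMap R (Module.End R N) s) n = (u : Rp p) • n := by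
      intro n; rw [hu, algebraMap_smul]; rfl
    constructor
    · intro x y hxy
      rw [h1, h1] at hxy
      have := congrArg (fun z => (↑u⁻¹ : Rp p) • z) hxy
      simpa [smul_smul] using this
    · intro y
      refine ⟨(↑u⁻¹ : Rp p) • y, ?_⟩
      rw [h1, smul_smul, Units.mul_inv, one_smul]
  surj n := by
    obtain ⟨s, hs, hn⟩ := h n
    exact ⟨⟨⟨s • n, hn⟩, ⟨s, hs⟩⟩, rfl⟩
  exists_of_eq {x y} hxy := ⟨1, by rw [Subtype.val_injective hxy]⟩

lemma equiv_sub {p : PrimeSpectrum R} {N : Type u} [AddCommGroup N] [Module (Rp p) N] [Module R N]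
    [IsScalarTower R (Rp p) N] (N0 : Submodule R N)
    (h : ∀ n : N, ∃ s ∉ p.asIdeal, s • n ∈ N0) : Nonempty (Lp p N0 ≃ₗ[Rp p] N) := by
  have := isLoc_sub N0 h
  exact ⟨(IsLocalizedModule.iso p.asIdeal.primeCompl N0.subtype).extendScalarsOfIsLocalization
    p.asIdeal.primeCompl (Rp p)⟩

lemma exists_sub (p : PrimeSpectrum R) (N : Type u) [AddCommGroup N] [Module (Rp p) N] [Module R N]
    [IsScalarTower R (Rp p) N] [hN : Module.Finite (Rp p) N] : ∃ N0 : Submodule R N, N0.FG ∧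
    (∀ n : N, ∃ s ∉ p.asIdeal, s • n ∈ N0) := by
  obtain ⟨t, ht⟩ := hN.1
  refine ⟨Submodule.span R t, ⟨t, rfl⟩, fun n => ?_⟩
  have hn : n ∈ Submodule.span (Rp p) (t : Set N) := ht ▸ Submodule.mem_top
  induction hn using Submodule.span_induction with
  | mem x hx => exact ⟨1, p.2.one_notMem, by rw [one_smul]; exact Submodule.subset_span hx⟩
  | zero => exact ⟨1, p.2.one_notMem, by simp⟩
  | add x y _ _ hx hy =>
    obtain ⟨s, hs, h1⟩ := hx
    obtain ⟨s', hs', h2⟩ := hy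
    refine ⟨s * s', p.2.mul_notMem hs hs', ?_⟩
    rw [smul_add]
    refine add_mem ?_ ?_
    · rw [mul_comm, mul_smul]; exact Submodule.smul_mem _ _ h1
    · rw [mul_smul]; exact Submodule.smul_mem _ _ h2
  | smul c x _ hx =>
    obtain ⟨s, hs, h1⟩ := hx
    obtain ⟨⟨r, s'⟩, hr⟩ := IsLocalization.surj p.asIdeal.primeCompl c
    refine ⟨s' * s, p.2.mul_notMem s'.2 hs, ?_⟩
    have : ((s' : R) * s) • c • x = (r : R) • s • x := by
      rw [← algebraMap_smul (Rp p) ((s' : R) * s), ← algebraMap_smul (Rp p) r,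
        ← algebraMap_smul (Rp p) s, map_mul, smul_smul, smul_smul, ← hr]
      congr 1; ring
    rw [this]; exact Submodule.smul_mem _ _ h1

lemma wp_ext {W : Set (ModuleCat.{u} R)} (hW : IsResolving R W) {p : PrimeSpectrum R}
    {A B C : Type u} [AddCommGroup A] [Module (Rp p) A] [AddCommGroup B] [Module (Rp p) B]
    [AddCommGroup C] [Module (Rp p) C] [Module.Finite (Rp p) B]
    {f : A →ₗ[Rp p] B} {g : B →ₗ[Rp p] C} (h : IsSES f g)
    (hA : Mem (Wp W p) A) (hC : Mem (Wp W p) C) : Mem (Wp W p) B := by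
  let _ := Module.compHom A (algebraMap R (Rp p))
  let _ := Module.compHom B (algebraMap R (Rp p))
  let _ := Module.compHom C (algebraMap R (Rp p))
  have : IsScalarTower R (Rp p) A := IsScalarTower.of_algebraMap_smul fun _ _ => rfl
  have : IsScalarTower R (Rp p) B := IsScalarTower.of_algebraMap_smul fun _ _ => rfl
  have : IsScalarTower R (Rp p) C := IsScalarTower.of_algebraMap_smul fun _ _ => rfl
  obtain ⟨B0, hB0, hB⟩ := exists_sub p B
  let f' := f.restrictScalars R
  let g' := g.restrictScalars R
  let A0 : Submodule R A := B0.comap f'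
  let C0 : Submodule R C := B0.map g'
  let i : A0 →ₗ[R] B0 := f'.restrict (fun a ha => ha)
  let j : B0 →ₗ[R] C0 := g'.restrict (fun a ha => ⟨a, ha, rfl⟩)
  have hij : IsSES i j := by
    refine IsSES.mk' ?_ ?_ ?_ ?_
    · rintro ⟨a, ha⟩ h0
      have h1 : f a = 0 := congrArg Subtype.val h0
      have : a = 0 := h.1 (by rw [h1, map_zero])
      exact Subtype.ext this
    · rintro ⟨c, b, hb, rfl⟩
      exact ⟨⟨b, hb⟩, rfl⟩
    · rintro ⟨a, ha⟩
      exact Subtype.ext (h.apply a)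
    · rintro ⟨b, hb⟩ h0
      have h1 : g b = 0 := congrArg Subtype.val h0
      obtain ⟨a, rfl⟩ := h.lift b h1
      exact ⟨⟨a, hb⟩, rfl⟩
  have : Module.Finite R B0 := Module.Finite.iff_fg.2 hB0
  have : Module.Finite R A0 := Module.Finite.of_injective i hij.1
  have : Module.Finite R C0 := Module.Finite.of_surjective j hij.2.1
  obtain ⟨eA⟩ := equiv_sub (p := p) A0 (fun a => by
    obtain ⟨s, hs, h1⟩ := hB (f a)
    refine ⟨s, hs, ?_⟩
    change f' (s • a) ∈ B0
    rw [map_smul]; exact h1)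
  obtain ⟨eB⟩ := equiv_sub (p := p) B0 hB
  obtain ⟨eC⟩ := equiv_sub (p := p) C0 (fun c => by
    obtain ⟨b, rfl⟩ := h.2.1 c
    obtain ⟨s, hs, h1⟩ := hB b
    exact ⟨s, hs, s • b, h1, map_smul g' s b⟩)
  obtain ⟨s, hs, h1⟩ := fac_of_loc hW (wp_iso eA.symm hA)
  obtain ⟨t, ht, h2⟩ := fac_of_loc hW (wp_iso eC.symm hC)
  exact wp_iso eB (loc_of_fac (p := p) (p.2.mul_notMem hs ht) (Fac.ses hW hij h1 h2))

lemma wp_fin {W : Set (ModuleCat.{u} R)} (hW : IsResolving R W) {p : PrimeSpectrum R}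
    {N : Type u} [AddCommGroup N] [Module (Rp p) N] (h : Mem (Wp W p) N) :
    Module.Finite (Rp p) N := by
  obtain ⟨X, hX, b, a, hab⟩ := h
  have : Module.Finite R X := hW.fg X hX
  exact Module.Finite.of_surjective a (fun n => ⟨b n, hab n⟩)

lemma wp_proj {W : Set (ModuleCat.{u} R)} (hW : IsResolving R W) {p : PrimeSpectrum R}
    {N : Type u} [AddCommGroup N] [Module (Rp p) N] [Module.Finite (Rp p) N]
    [Module.Projective (Rp p) N] : Mem (Wp W p) N := by
  have h1 : Mem (Wp W p) (Rp p) := wp_iso (LpR p) (wp_loc p (mem_proj hW R))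
  have h2 : ∀ n : ℕ, Mem (Wp W p) (Fin n → Rp p) := by
    intro n
    induction n with
    | zero => exact wp_retract h1 0 0 (fun _ => Subsingleton.elim _ _)
    | succ n ih =>
      have : IsSES (LinearMap.inl (Rp p) (Rp p) (Fin n → Rp p)) (LinearMap.snd (Rp p) (Rp p) (Fin n → Rp p)) := ses_inl
      exact wp_iso (Fin.consLinearEquiv (Rp p) (fun _ : Fin (n+1) => Rp p)) (wp_ext hW this h1 ih)
  obtain ⟨n, f, hf⟩ := Module.Finite.exists_fin' (Rp p) N
  obtain ⟨s, hs⟩ := Module.projective_lifting_property f LinearMap.id hf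
  exact wp_retract (h2 n) s f (fun x => LinearMap.congr_fun hs x)

lemma wp_syz {W : Set (ModuleCat.{u} R)} (hW : IsResolving R W) {p : PrimeSpectrum R}
    {K P N : Type u} [AddCommGroup K] [Module (Rp p) K] [AddCommGroup P] [Module (Rp p) P]
    [AddCommGroup N] [Module (Rp p) N] [Module.Finite (Rp p) P] [Module.Projective (Rp p) P]
    {f : K →ₗ[Rp p] P} {g : P →ₗ[Rp p] N} (h : IsSES f g)
    (hN : Mem (Wp W p) N) : Mem (Wp W p) K := by
  have := wp_fin hW hN
  let _ := Module.compHom N (algebraMap R (Rp p))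
  have : IsScalarTower R (Rp p) N := IsScalarTower.of_algebraMap_smul fun _ _ => rfl
  obtain ⟨N0, hN0, hN1⟩ := exists_sub p N
  have : Module.Finite R N0 := Module.Finite.iff_fg.2 hN0
  obtain ⟨e⟩ := equiv_sub (p := p) N0 hN1
  obtain ⟨s, hs, h1⟩ := fac_of_loc hW (wp_iso e.symm hN)
  obtain ⟨n, π, hπ⟩ := Module.Finite.exists_fin' R N0
  have h2 := loc_of_fac (p := p) hs (Fac.syz hW (ses_ker hπ) h1)
  have h3 := loc_ses p (ses_ker hπ)
  have h4 : IsSES (Lmap p (LinearMap.ker π).subtype) (e.toLinearMap ∘ₗ Lmap p π) := by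
    refine ⟨h3.1, e.surjective.comp h3.2.1, ?_⟩
    rw [h3.2.2, LinearEquiv.ker_comp]
  obtain ⟨i, -, hi⟩ := pb_ses1 g h4
  obtain ⟨j, -, hj⟩ := pb_ses2 (e.toLinearMap ∘ₗ Lmap p π) h
  have h5 := wp_ext hW hi h2 (wp_proj hW)
  have : Module.Projective (Rp p) (Lp p (Fin n → R)) :=
    Module.projective_of_isLocalizedModule p.asIdeal.primeCompl
      (LocalizedModule.mkLinearMap p.asIdeal.primeCompl (Fin n → R))
  let q := pb2 g (e.toLinearMap ∘ₗ Lmap p π)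
  obtain ⟨σ, hσ⟩ := Module.projective_lifting_property q LinearMap.id hj.2.1
  have h6 : ∀ y, q (y - σ (q y)) = 0 := by
    intro y
    have := LinearMap.congr_fun hσ (q y)
    simp only [LinearMap.comp_apply, LinearMap.id_apply] at this
    rw [map_sub, this, sub_self]
  have h7 : ∀ y, y - σ (q y) ∈ LinearMap.range j :=
    fun y => hj.lift _ (h6 y)
  let r := LinearMap.codRestrict (LinearMap.range j) (LinearMap.id - σ ∘ₗ q) h7
  refine wp_retract h5 j ((LinearEquiv.ofInjective j hj.1).symm.toLinearMap ∘ₗ r) (fun k => ?_)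
  rw [LinearMap.comp_apply, LinearEquiv.coe_coe, LinearEquiv.symm_apply_eq]
  refine Subtype.ext ?_
  change j k - σ (q (j k)) = j k
  have h8 : q (j k) = 0 := hj.apply k
  rw [h8, map_zero, sub_zero]

theorem wp_resolving {W : Set (ModuleCat.{u} R)} (hW : IsResolving R W) (p : PrimeSpectrum R) :
    IsResolving (Rp p) (Wp W p) where
  fg M h := wp_fin (N := M) hW h
  iso_closed := by
    rintro M N ⟨e⟩ h
    exact wp_iso (N' := M) (N := N) e h
  proj_mem M _ _ := wp_proj (N := M) hW
  summand_closed M N h := wp_retract (N := M) h (LinearMap.inl (Rp p) M N) (LinearMap.fst (Rp p) M N)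
    (fun _ => rfl)
  ext_closed A B C f g h hA hC := by
    have := wp_fin (N := A) hW hA
    have := wp_fin (N := C) hW hC
    have : Module.Finite (Rp p) B := by
      have h1 : (LinearMap.range f).FG := Module.Finite.iff_fg.1 inferInstance
      refine ⟨Submodule.fg_of_fg_map_of_fg_inf_ker g ?_ ?_⟩
      · rw [Submodule.map_top, LinearMap.range_eq_top.2 h.2.1]
        exact Module.Finite.fg_top
      · rw [top_inf_eq, ← h.2.2]; exact h1
    exact wp_ext (A := A) (B := B) (C := C) hW h hA hC
  syzygy_closed K P M f g h _ _ _ hM := wp_syz (K := K) (P := P) (N := M) hW h hM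

lemma wp_pi {W : Set (ModuleCat.{u} R)} (hW : IsResolving R W) (p : PrimeSpectrum R) (n : ℕ) :
    ∀ (X : Fin n → Type u) [∀ i, AddCommGroup (X i)] [∀ i, Module (Rp p) (X i)],
    (∀ i, Mem (Wp W p) (X i)) → Mem (Wp W p) (∀ i, X i) := by
  induction n with
  | zero => intro X _ _ _; exact mem_zero (wp_resolving hW p)
  | succ n ih =>
    intro X _ _ h
    exact wp_iso (Fin.consLinearEquiv (Rp p) X)
      (mem_prod (wp_resolving hW p) (h 0) (ih (fun i => X i.succ) (fun i => h i.succ)))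

lemma wp_of_memAdd {W : Set (ModuleCat.{u} R)} (hW : IsResolving R W) {p : PrimeSpectrum R}
    {N : ModuleCat.{u} (Rp p)} (h : memAddLocal R W p N) : N ∈ Wp W p := by
  obtain ⟨n, X, hX, N', ⟨e⟩⟩ := h
  refine wp_retract (N := N) (N' := N × N') (wp_iso e.symm (wp_pi hW p n _ (fun i => wp_loc (X := X i) p (hX i))))
    (LinearMap.inl (Rp p) N N') (LinearMap.fst (Rp p) N N') (fun _ => rfl)

lemma memAdd_of_wp {W : Set (ModuleCat.{u} R)} {p : PrimeSpectrum R}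
    {N : ModuleCat.{u} (Rp p)} (h : N ∈ Wp W p) : memAddLocal R W p N := by
  obtain ⟨X, hX, b, a, hab⟩ := h
  obtain ⟨e⟩ := retract_equiv b a hab
  exact ⟨1, fun _ => X, fun _ => hX, ModuleCat.of _ (LinearMap.ker a),
    ⟨e.symm.trans (LinearEquiv.funUnique (Fin 1) (Rp p) (Lp p X)).symm⟩⟩

lemma mem_of_loc {W : Set (ModuleCat.{u} R)} (hW : IsResolving R W) [Module.Finite R M]
    (h : ∀ p : PrimeSpectrum R, Mem (Wp W p) (Lp p M)) : Mem W M := by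
  apply mem_of_facI_top hW
  by_contra hne
  obtain ⟨m, hm, hle⟩ := Ideal.exists_le_maximal _ hne
  obtain ⟨s, hs, h1⟩ := fac_of_loc hW (h ⟨m, hm.isPrime⟩)
  exact hs (hle ((mem_facI hW).2 h1))

lemma minSyz_om {S : Type u} [CommRing S] [IsLocalRing S] [IsNoetherianRing S]
    {W : Set (ModuleCat.{u} S)} (hW : IsResolving S W) : ∀ (n : ℕ) (M K : ModuleCat.{u} S),
    IsMinSyz S n M K → (K ∈ W ↔ M ∈ omn n W) := by
  intro n
  induction n with
  | zero =>
    rintro M K ⟨e⟩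
    exact ⟨hW.iso_closed _ _ ⟨e⟩, hW.iso_closed _ _ ⟨e.symm⟩⟩
  | succ n ih =>
    rintro M K ⟨F, g, K', i, h1, h2, h3, h4, h5, h6, h7⟩
    rw [ih K' K h7, omn_succ']
    exact ⟨fun h => om_mk (M := M) (K := K') (P := F) (omn_resolving hW n) ⟨h5, h3, h6⟩ h,
      fun h => om_all (M := M) (K := K') (P := F) (omn_resolving hW n) ⟨h5, h3, h6⟩ h⟩

end PartD

section PartE

set_option linter.unusedSectionVars false

variable {R : Type u} [CommRing R] [IsNoetherianRing R]
variable {A B C M N X Y : Type u}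
  [AddCommGroup A] [Module R A] [AddCommGroup B] [Module R B] [AddCommGroup C] [Module R C]
  [AddCommGroup M] [Module R M] [AddCommGroup N] [Module R N]
  [AddCommGroup X] [Module R X] [AddCommGroup Y] [Module R Y]

open RingTheory.Sequence
open scoped Pointwise

lemma not_ass {q : PrimeSpectrum R} (hq : ND q 1 M) : q.asIdeal ∉ associatedPrimes R M := by
  intro h
  have h1 := Module.associatedPrimes.mem_associatedPrimes_atPrime_of_mem_associatedPrimes h
  obtain ⟨rs, hl, hm, hr⟩ := (le_depthE_iff _ _).1 hq
  obtain ⟨x, rfl⟩ := List.length_eq_one_iff.1 hl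
  rw [isWeaklyRegular_cons_iff] at hr
  have h2 : x ∈ ⋃ p ∈ associatedPrimes (Rp q) (Lp q M), (p : Set (Rp q)) :=
    Set.mem_biUnion h1 (hm x (by simp))
  rw [biUnion_associatedPrimes_eq_compl_regular] at h2
  exact h2 hr.1

lemma exists_reg [Module.Finite R M] {p : PrimeSpectrum R} (h : ∀ q, p ≤ q → ND q 1 M) :
    ∃ x ∈ p.asIdeal, IsSMulRegular M x := by
  by_contra hn
  push Not at hn
  have h1 : (p.asIdeal : Set R) ⊆ ⋃ I ∈ associatedPrimes R M, (I : Set R) := by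
    rw [biUnion_associatedPrimes_eq_compl_regular]
    exact fun x hx => hn x hx
  obtain ⟨I, hI, hle⟩ := (Ideal.subset_union_prime_finite (associatedPrimes.finite R M) (f := id) ⊤ ⊤
    (fun i hi _ _ => IsAssociatedPrime.isPrime hi)).1 h1
  exact not_ass (q := ⟨I, IsAssociatedPrime.isPrime hI⟩) (h ⟨I, IsAssociatedPrime.isPrime hI⟩ hle) hI

lemma exists_seq {p : PrimeSpectrum R} : ∀ (n : ℕ) (M : Type u) [AddCommGroup M] [Module R M]
    [Module.Finite R M], (∀ q, p ≤ q → ND q n M) →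
    ∃ rs : List R, rs.length = n ∧ (∀ r ∈ rs, r ∈ p.asIdeal) ∧ IsWeaklyRegular M rs := by
  intro n
  induction n with
  | zero => intro M _ _ _ _; exact ⟨[], rfl, by simp, by simp⟩
  | succ n ih =>
    intro M _ _ _ h
    obtain ⟨x, hx, hreg⟩ := exists_reg (M := M) (p := p) (fun q hq => nd_le (by omega) (h q hq))
    obtain ⟨rs, h1, h2, h3⟩ := ih (QuotSMulTop x M) (fun q hq =>
      nd_right (smul_ses hreg) (nd_le (by omega) (h q hq)) (h q hq))
    exact ⟨x :: rs, by simp [h1], by simpa using ⟨hx, h2⟩, (isWeaklyRegular_cons_iff _ _ _).2 ⟨hreg, h3⟩⟩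

lemma nd_of_seq {p : PrimeSpectrum R} {rs : List R} (h : ∀ r ∈ rs, r ∈ p.asIdeal)
    (hr : IsWeaklyRegular M rs) : ND p rs.length M := by
  refine (le_depthE_iff _ _).2 ⟨rs.map (algebraMap R (Rp p)), by simp, ?_, ?_⟩
  · intro r hr'
    obtain ⟨a, ha, rfl⟩ := List.mem_map.1 hr'
    exact (IsLocalization.AtPrime.to_map_mem_maximal_iff (Rp p) p.asIdeal a).2 (h a ha)
  · exact hr.of_isLocalizedModule (Rp p) p.asIdeal.primeCompl
      (LocalizedModule.mkLinearMap p.asIdeal.primeCompl M)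

lemma grade_eq (hCM : ∀ p : PrimeSpectrum R, IsCMLocalRing (Localization.AtPrime p.asIdeal))
    (p : PrimeSpectrum R) (n : ℕ) : (n : ℕ∞) ≤ gradeE R p.asIdeal ↔ n ≤ htn p := by
  rw [gradeE, le_depthE_iff]
  constructor
  · rintro ⟨rs, rfl, h1, h2⟩
    exact (nd_R hCM p).1 (nd_of_seq h1 h2)
  · intro h
    exact exists_seq n R (fun q hq => (nd_R hCM q).2 (h.trans (htn_le hq)))

lemma psi_iff (f : PrimeSpectrum R → ℕ) (M : ModuleCat.{u} R) : M ∈ psiDepth R f ↔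
    Module.Finite R M ∧ ∀ p, Cod p (f p) M := by
  refine and_congr Iff.rfl (forall_congr' fun p => ?_)
  rw [← htn_coe, ← ENat.natCast_sub]; rfl

lemma le_locDepth {p : PrimeSpectrum R} {n : ℕ} {M : ModuleCat.{u} R} :
    (n : ℕ∞) ≤ localDepth R p M ↔ ND p n M := Iff.rfl

lemma exists_d (hCM : ∀ p : PrimeSpectrum R, IsCMLocalRing (Localization.AtPrime p.asIdeal))
    {W : Set (ModuleCat.{u} R)} (hW : IsResolving R W) (p : PrimeSpectrum R) :
    ∃ d : ℕ, (⨅ X ∈ W, localDepth R p X) = (d : ℕ∞) ∧ d ≤ htn p ∧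
      (∃ X ∈ W, ND p d X ∧ ¬ ND p (d+1) X) ∧ ∀ X ∈ W, ND p d X := by
  rw [← sInf_image]
  have hR : ModuleCat.of R R ∈ W := mem_proj hW R
  have hne : ((fun X => localDepth R p X) '' W).Nonempty := ⟨_, _, hR, rfl⟩
  obtain ⟨X, hX, hXe⟩ := csInf_mem hne
  have h1 : sInf ((fun X => localDepth R p X) '' W) < ((htn p + 1 : ℕ) : ℕ∞) := by
    refine lt_of_le_of_lt (sInf_le ⟨_, hR, rfl⟩) ?_
    rw [← not_le]
    intro h
    have := (nd_R hCM p).1 (le_locDepth.1 h)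
    omega
  obtain ⟨d, hd⟩ := ENat.ne_top_iff_exists.1 (ne_top_of_lt h1)
  rw [← hd] at h1 hXe
  refine ⟨d, hd.symm, ?_, ⟨X, hX, ?_, ?_⟩, ?_⟩
  · have : d < htn p + 1 := by exact_mod_cast h1
    omega
  · rw [← le_locDepth]; exact hXe.ge
  · rw [← le_locDepth, not_le]
    refine lt_of_le_of_lt hXe.le ?_
    exact_mod_cast Nat.lt_succ_self d
  · intro Y hY
    rw [← le_locDepth, hd]
    exact sInf_le ⟨Y, hY, rfl⟩

lemma loc_mem (W : Set (ModuleCat.{u} R)) (hW : IsResolving R W) (hdom : Dominant R W)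
    (d : PrimeSpectrum R → ℕ) (hd : ∀ p, ∃ X ∈ W, ND p (d p) X ∧ ¬ ND p (d p+1) X)
    [Module.Finite R M] (hM : ∀ p, ND p (d p) M) : ∀ (n : ℕ) (p : PrimeSpectrum R), htn p = n →
    Mem (Wp W p) (Lp p M) := by
  intro n
  induction n using Nat.strong_induction_on with
  | _ n ih =>
  intro p hp
  have hWp := wp_resolving hW p
  obtain ⟨X, hX, h1, h2⟩ := hd p
  obtain ⟨m, K, hK1, hK2⟩ := hdom p (Set.mem_univ p)
  have hk := (minSyz_om hWp m _ K hK1).1 (wp_of_memAdd hW hK2)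
  have hk' := c2 hWp (wp_loc (X := X) p hX) h1 h2 m hk
  have hrad : IsLocalRing.maximalIdeal (Rp p) ≤ (facI hWp (Lp p M)).radical := by
    rw [Ideal.radical_eq_sInf]
    refine le_sInf ?_
    rintro Q ⟨hQ, hQp⟩
    have hle : Q ≤ IsLocalRing.maximalIdeal (Rp p) := IsLocalRing.le_maximalIdeal hQp.ne_top
    let q : PrimeSpectrum R := PrimeSpectrum.comap (algebraMap R (Rp p)) ⟨Q, hQp⟩
    have hqp : q ≤ p := by
      change Q.comap (algebraMap R (Rp p)) ≤ p.asIdeal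
      intro x hx
      exact (IsLocalization.AtPrime.to_map_mem_maximal_iff (Rp p) p.asIdeal x).1 (hle hx)
    rcases hqp.eq_or_lt with he | hlt
    · rw [← Localization.AtPrime.map_eq_maximalIdeal, Ideal.map_le_iff_le_comap]
      have : p.asIdeal = Q.comap (algebraMap R (Rp p)) := congrArg PrimeSpectrum.asIdeal he.symm
      exact this.le
    · exfalso
      obtain ⟨s, hs, hf⟩ := fac_of_loc hW (ih (htn q) (hp ▸ htn_lt hlt) q rfl)
      exact hs (hQ (hf.loc p))
  obtain ⟨k, hk2⟩ := Ideal.exists_pow_le_of_le_radical_of_fg hrad (IsNoetherian.noetherian _)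
  exact tl_local hWp hk' (hM p) k (fun x hx => hk2 hx)

theorem dir1 (hCM : ∀ p : PrimeSpectrum R, IsCMLocalRing (Localization.AtPrime p.asIdeal))
    (W : Set (ModuleCat.{u} R)) (hW : IsResolving R W) (hdom : Dominant R W) :
    ∃ f : PrimeSpectrum R → ℕ, GradeConsistent R f ∧
        (∀ p : PrimeSpectrum R,
          (f p : ℕ∞) = heightE R p - ⨅ X ∈ W, localDepth R p X) ∧
        psiDepth R f = W := by
  choose d h1 h2 h3 h4 using exists_d hCM hW
  refine ⟨fun p => htn p - d p, ⟨fun p => ?_, fun p q hpq => ?_⟩, fun p => ?_, ?_⟩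
  · rw [grade_eq hCM]; exact Nat.sub_le _ _
  · obtain ⟨X, hX, h5, h6⟩ := h3 p
    have := hW.fg X hX
    have hq : Cod q (htn q - d q) X := by
      have h7 := h4 q X hX
      rw [Cod]; convert h7 using 1; have := h2 q; omega
    have h8 := Cod.down (p := p) hpq hq
    by_contra hlt
    refine h6 (nd_le ?_ h8)
    dsimp only at hlt
    omega
  · rw [h1, ← htn_coe, ENat.natCast_sub]
  · ext M
    rw [psi_iff]
    have he : ∀ p, htn p - (htn p - d p) = d p := fun p => by have := h2 p; omega
    constructor
    · rintro ⟨hf, hM⟩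
      refine mem_of_loc (M := M) hW (fun p => loc_mem W hW hdom d h3 (fun q => ?_) _ p rfl)
      have := hM q
      rw [Cod, he] at this; exact this
    · intro hM
      refine ⟨hW.fg M hM, fun p => ?_⟩
      rw [Cod, he]; exact h4 p M hM

end PartE

section PartF

set_option linter.unusedSectionVars false

variable {R : Type u} [CommRing R] [IsNoetherianRing R]
variable {A B C M N X Y : Type u}
  [AddCommGroup A] [Module R A] [AddCommGroup B] [Module R B] [AddCommGroup C] [Module R C]
  [AddCommGroup M] [Module R M] [AddCommGroup N] [Module R N]
  [AddCommGroup X] [Module R X] [AddCommGroup Y] [Module R Y]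

open RingTheory.Sequence
open scoped Pointwise


lemma nd_proj (hCM : ∀ p : PrimeSpectrum R, IsCMLocalRing (Localization.AtPrime p.asIdeal))
    (p : PrimeSpectrum R) [Module.Finite R M] [Module.Projective R M] : ND p (htn p) M := by
  obtain ⟨n, g, hg⟩ := Module.Finite.exists_fin' R M
  obtain ⟨b, hb⟩ := Module.projective_lifting_property g LinearMap.id hg
  exact nd_retract b g (fun m => LinearMap.congr_fun hb m) (nd_pi ((nd_R hCM p).2 le_rfl) n)

lemma fin_mid {f : A →ₗ[R] B} {g : B →ₗ[R] C} [Module.Finite R A]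
    [Module.Finite R C] (h : IsSES f g) : Module.Finite R B := by
  have : Module.Finite R (LinearMap.ker g) := by rw [← h.2.2]; infer_instance
  have : Module.Finite R (B ⧸ LinearMap.ker g) :=
    Module.Finite.equiv (LinearMap.quotKerEquivOfSurjective g h.2.1).symm
  exact Module.Finite.of_submodule_quotient (LinearMap.ker g)

lemma nd_syz {p : PrimeSpectrum R} {f : A →ₗ[R] B} {g : B →ₗ[R] C} [Module.Finite R A]
    [Module.Finite R B] [Module.Finite R C] (h : IsSES f g) {n : ℕ} (hB : ND p n B)
    (hC : ND p (n-1) C) : ND p n A := by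
  cases n with
  | zero => exact nd_zero
  | succ n => exact nd_left h hB hC

lemma psi_resolving (hCM : ∀ p : PrimeSpectrum R, IsCMLocalRing (Localization.AtPrime p.asIdeal))
    (f : PrimeSpectrum R → ℕ) : IsResolving R (psiDepth R f) where
  fg M hM := ((psi_iff f M).1 hM).1
  iso_closed M N := by
    rintro ⟨e⟩ hM
    obtain ⟨h1, h2⟩ := (psi_iff f M).1 hM
    have := Module.Finite.equiv e
    exact (psi_iff f N).2 ⟨this, fun p => nd_iso e.symm (h2 p)⟩
  proj_mem M _ _ := (psi_iff f M).2 ⟨inferInstance, fun p => nd_le (Nat.sub_le _ _) (nd_proj hCM p)⟩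
  summand_closed M N hMN := by
    obtain ⟨h1, h2⟩ := (psi_iff f _).1 hMN
    have h1 : Module.Finite R (M × N) := h1
    have : Module.Finite R M := Module.Finite.of_surjective (LinearMap.fst R M N) LinearMap.fst_surjective
    exact (psi_iff f _).2 ⟨this, fun p => nd_retract (X := M × N) (LinearMap.inl R M N) (LinearMap.fst R M N) (fun _ => rfl) (h2 p)⟩
  ext_closed A B C i g h hA hC := by
    obtain ⟨h1, h2⟩ := (psi_iff f _).1 hA
    obtain ⟨h3, h4⟩ := (psi_iff f _).1 hC
    have := fin_mid h
    exact (psi_iff f _).2 ⟨this, fun p => nd_mid h (h2 p) (h4 p)⟩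
  syzygy_closed K P M i g h _ _ _ hM := by
    obtain ⟨h3, h4⟩ := (psi_iff f _).1 hM
    refine (psi_iff f _).2 ⟨inferInstance, fun p => nd_syz h (nd_le (Nat.sub_le _ _) (nd_proj hCM p)) (nd_le (Nat.sub_le _ _) (h4 p))⟩

/-- finite codepth bound -/
def FC (M : Type u) [AddCommGroup M] [Module R M] : Prop := ∃ n : ℕ, ∀ q : PrimeSpectrum R, Cod q n M

lemma fc_of_kill (J : Ideal R) (h : ∀ p : PrimeSpectrum R, J ≤ p.asIdeal → FC (R := R) (R ⧸ p.asIdeal))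
    (M : Type u) [AddCommGroup M] [Module R M] [hM : Module.Finite R M] :
    (∀ r ∈ J, ∀ m : M, r • m = 0) → FC (R := R) M := by
  refine IsNoetherianRing.induction_on_isQuotientEquivQuotientPrime R hM
    (motive := fun N _ _ _ => (∀ r ∈ J, ∀ m : N, r • m = 0) → FC (R := R) N) ?_ ?_ ?_
  · intro N _ _ _ _ _
    exact ⟨0, fun q => nd_of_kill (s := 1) q.2.one_notMem (fun _ => Subsingleton.elim _ _) _⟩
  · intro N _ _ _ p e hk
    have hJ : J ≤ p.asIdeal := by
      intro r hr
      have h1 := hk r hr (e.symm (Ideal.Quotient.mk _ 1))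
      rw [← map_smul, LinearEquiv.map_eq_zero_iff] at h1
      rw [← Ideal.Quotient.eq_zero_iff_mem, ← h1, ← mul_one r]
      rw [map_mul]
      simp [Algebra.smul_def]
    obtain ⟨n, hn⟩ := h p hJ
    exact ⟨n, fun q => nd_iso e (hn q)⟩
  · intro N1 _ _ _ N2 _ _ _ N3 _ _ _ f g hf hg hfg h1 h3 hk
    obtain ⟨n1, h1⟩ := h1 (fun r hr m => hf (by rw [map_smul, hk r hr, map_zero]))
    obtain ⟨n3, h3⟩ := h3 (fun r hr m => by
      obtain ⟨m, rfl⟩ := hg m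
      rw [← map_smul, hk r hr, map_zero])
    refine ⟨max n1 n3, fun q => nd_mid (exact_ses hf hg hfg) (nd_le ?_ (h1 q)) (nd_le ?_ (h3 q))⟩ <;> omega

lemma exists_A {p : PrimeSpectrum R} : ∀ (n c : ℕ) (M : Type u) [AddCommGroup M] [Module R M]
    [Module.Finite R M], (∀ q, p ≤ q → ND q (htn q - c) M) → c + n ≤ htn p →
    ∃ (A : Type u) (_ : AddCommGroup A) (_ : Module R A) (_ : Module.Finite R A) (rs : List R),
      rs.length = n ∧ (∀ r ∈ rs, r ∈ p.asIdeal) ∧ IsWeaklyRegular M rs ∧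
      (∀ r ∈ rs, ∀ a : A, r • a = 0) ∧ (∀ r : R, (∀ m : M, r • m = 0) → ∀ a : A, r • a = 0) ∧
      (∀ q, p ≤ q → ND q (htn q - (c + n)) A) ∧ (ND p 1 A → ND p (n+1) M) := by
  intro n
  induction n with
  | zero =>
    intro c M _ _ _ h _
    exact ⟨M, inferInstance, inferInstance, inferInstance, [], rfl, by simp, by simp, by simp,
      fun _ h => h, h, id⟩
  | succ n ih =>
    intro c M _ _ _ h hc
    obtain ⟨x, hx, hreg⟩ := exists_reg (M := M) (p := p) (fun q hq => nd_le (by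
      have := htn_le hq; omega) (h q hq))
    obtain ⟨A, i1, i2, i3, rs, h1, h2, h3, h4, h5, h6, h7⟩ := ih (c+1) (QuotSMulTop x M) (fun q hq =>
      nd_right (smul_ses hreg) (nd_le (by omega) (h q hq)) (nd_le (by
        have := htn_le hq; omega) (h q hq))) (by omega)
    have hxq : ∀ m : QuotSMulTop x M, x • m = 0 := by
      intro m
      obtain ⟨m, rfl⟩ := Submodule.mkQ_surjective _ m
      rw [← map_smul]
      simp only [Submodule.mkQ_apply, Submodule.Quotient.mk_eq_zero]
      exact ⟨m, trivial, rfl⟩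
    refine ⟨A, i1, i2, i3, x :: rs, by simp [h1], by simpa using ⟨hx, h2⟩,
      (isWeaklyRegular_cons_iff _ _ _).2 ⟨hreg, h3⟩, ?_, ?_, ?_, ?_⟩
    · intro r hr
      rcases List.mem_cons.1 hr with rfl | hr
      · exact h5 _ hxq
      · exact h4 r hr
    · intro r hr
      refine h5 r (fun m => ?_)
      obtain ⟨m, rfl⟩ := Submodule.mkQ_surjective _ m
      rw [← map_smul, hr, map_zero]
    · intro q hq
      have := h6 q hq
      convert this using 1; omega
    · intro hA
      refine nd_diag (fun _ : Fin 1 => x) (fun _ => hx) (fun _ => LinearMap.id) (by simp)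
        (smul_ses hreg) (h7 hA)

lemma exists_s {p : PrimeSpectrum R} (M : Type u) [AddCommGroup M] [Module R M] [hM : Module.Finite R M] :
    (∀ q, q < p → ∃ t ∉ q.asIdeal, ∀ m : M, t • m = 0) →
    ∃ s ∉ p.asIdeal, ∀ q : PrimeSpectrum R, p ≤ q → s ∉ q.asIdeal → ∀ n, ND q n (R ⧸ p.asIdeal) → ND q n M := by
  refine IsNoetherianRing.induction_on_isQuotientEquivQuotientPrime R hM
    (motive := fun N _ _ _ => (∀ q, q < p → ∃ t ∉ q.asIdeal, ∀ m : N, t • m = 0) →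
    ∃ s ∉ p.asIdeal, ∀ q : PrimeSpectrum R, p ≤ q → s ∉ q.asIdeal → ∀ n, ND q n (R ⧸ p.asIdeal) → ND q n N) ?_ ?_ ?_
  · intro N _ _ _ _ _
    exact ⟨1, p.2.one_notMem, fun q _ hq n _ => nd_of_kill hq (fun _ => Subsingleton.elim _ _) _⟩
  · intro N _ _ _ p' e hk
    have hz : ∀ r, (∀ m : N, r • m = 0) ↔ r ∈ p'.asIdeal := by
      intro r
      constructor
      · intro hk
        have h1 := hk (e.symm (Ideal.Quotient.mk _ 1))
        rw [← map_smul, LinearEquiv.map_eq_zero_iff] at h1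
        rw [← Ideal.Quotient.eq_zero_iff_mem, ← h1, ← mul_one r]
        rw [map_mul]
        simp [Algebra.smul_def]
      · intro hr m
        apply e.injective
        rw [map_smul, map_zero]
        obtain ⟨y, hy⟩ := Ideal.Quotient.mk_surjective (e m)
        rw [← hy]
        change Ideal.Quotient.mk _ (r * y) = 0
        rw [Ideal.Quotient.eq_zero_iff_mem]
        exact Ideal.mul_mem_right _ _ hr
    by_cases hle : p' ≤ p
    · rcases hle.eq_or_lt with rfl | hlt
      · exact ⟨1, p'.2.one_notMem, fun q _ _ n hn => nd_iso e hn⟩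
      · obtain ⟨t, ht, hk⟩ := hk p' hlt
        exact absurd ((hz t).1 hk) ht
    · obtain ⟨s, hs, hs'⟩ := SetLike.not_le_iff_exists.1 (show ¬ p'.asIdeal ≤ p.asIdeal from hle)
      exact ⟨s, hs', fun q _ hq n _ => nd_of_kill hq ((hz s).2 hs) n⟩
  · intro N1 _ _ _ N2 _ _ _ N3 _ _ _ f g hf hg hfg h1 h3 hk
    obtain ⟨s1, hs1, h1⟩ := h1 (fun q hq => by
      obtain ⟨t, ht, hk⟩ := hk q hq
      exact ⟨t, ht, fun m => hf (by rw [map_smul, hk, map_zero])⟩)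
    obtain ⟨s3, hs3, h3⟩ := h3 (fun q hq => by
      obtain ⟨t, ht, hk⟩ := hk q hq
      refine ⟨t, ht, fun m => ?_⟩
      obtain ⟨m, rfl⟩ := hg m
      rw [← map_smul, hk, map_zero])
    refine ⟨s1 * s3, p.2.mul_notMem hs1 hs3, fun q hq hs n hn => nd_mid (exact_ses hf hg hfg) ?_ ?_⟩
    · exact h1 q hq (fun h => hs (Ideal.mul_mem_right _ _ h)) n hn
    · exact h3 q hq (fun h => hs (Ideal.mul_mem_left _ _ h)) n hn

lemma ass_of_not_nd {p : PrimeSpectrum R} [Module.Finite R A] (h : ¬ ND p 1 A) :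
    ∃ j : (R ⧸ p.asIdeal) →ₗ[R] A, Function.Injective j := by
  obtain ⟨f, hf⟩ := k_embed (S := Rp p) (X := Lp p A) h
  have h1 : IsAssociatedPrime (IsLocalRing.maximalIdeal (Rp p)) (Lp p A) := by
    refine IsAssociatedPrime.map_of_injective (M := IsLocalRing.ResidueField (Rp p)) f ?_ hf
    rw [isAssociatedPrime_iff]
    refine ⟨inferInstance, 1, ?_⟩
    ext x
    rw [Submodule.mem_colon_singleton, Submodule.mem_bot, Algebra.smul_def, mul_one,
      IsLocalRing.ResidueField.algebraMap_eq, IsLocalRing.residue_eq_zero_iff]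
  have h2 := Module.associatedPrimes.comap_mem_associatedPrimes_of_mem_associatedPrimes_of_isLocalizedModule_of_fg
    p.asIdeal.primeCompl (LocalizedModule.mkLinearMap p.asIdeal.primeCompl A) _ h1
    (IsNoetherian.noetherian _)
  have h3 : (IsLocalRing.maximalIdeal (Rp p)).comap (algebraMap R (Rp p)) = p.asIdeal :=
    Localization.AtPrime.under_maximalIdeal (I := p.asIdeal)
  rw [h3] at h2
  obtain ⟨-, x, hx⟩ := isAssociatedPrime_iff.1 h2
  have hx' : ∀ r, r ∈ p.asIdeal ↔ r • x = 0 := fun r => by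
    rw [hx, Submodule.mem_colon_singleton, Submodule.mem_bot]
  refine ⟨p.asIdeal.liftQ (LinearMap.toSpanSingleton R A x) (fun r hr => (hx' r).1 hr), ?_⟩
  exact LinearMap.ker_eq_bot.1 (Submodule.ker_liftQ_eq_bot _ _ _ (fun r hr => (hx' r).2 hr))

lemma reg_quot {p : PrimeSpectrum R} {s : R} (hs : s ∉ p.asIdeal) :
    IsSMulRegular (R ⧸ p.asIdeal) s := by
  rw [isSMulRegular_iff_right_eq_zero_of_smul]
  intro a ha
  obtain ⟨a, rfl⟩ := Ideal.Quotient.mk_surjective a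
  have : Ideal.Quotient.mk p.asIdeal (s * a) = 0 := ha
  rw [Ideal.Quotient.eq_zero_iff_mem] at this ⊢
  exact (p.2.mem_or_mem this).resolve_left hs

lemma quot_kill {I : Ideal R} {r : R} (hr : r ∈ I) (m : R ⧸ I) : r • m = 0 := by
  obtain ⟨y, rfl⟩ := Ideal.Quotient.mk_surjective m
  change Ideal.Quotient.mk _ (r * y) = 0
  rw [Ideal.Quotient.eq_zero_iff_mem]
  exact Ideal.mul_mem_right _ _ hr

lemma fc_prime (hCM : ∀ p : PrimeSpectrum R, IsCMLocalRing (Localization.AtPrime p.asIdeal))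
    (p : PrimeSpectrum R) : FC (R := R) (R ⧸ p.asIdeal) := by
  refine (InvImage.wf (fun r : PrimeSpectrum R => r.asIdeal) (wellFounded_gt (α := Ideal R))).induction
    (C := fun p => FC (R := R) (R ⧸ p.asIdeal)) p ?_
  intro p ih
  obtain ⟨A, i1, i2, i3, rs, h1, h2, h3, h4, -, h6, h7⟩ := exists_A (p := p) (htn p) 0 R
    (fun q _ => (nd_R hCM q).2 (by omega)) (by omega)
  obtain ⟨j, hj⟩ := ass_of_not_nd (p := p) (A := A) (fun h => by
    have := (nd_R hCM p).1 (h7 h)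
    omega)
  have hses : IsSES j (LinearMap.range j).mkQ :=
    ⟨hj, Submodule.mkQ_surjective _, by rw [Submodule.ker_mkQ]⟩
  obtain ⟨s, hs, hs'⟩ := exists_s (p := p) (A ⧸ LinearMap.range j) (by
    intro q hq
    have : ∃ r ∈ rs, r ∉ q.asIdeal := by
      by_contra hc
      push Not at hc
      have := (nd_R hCM q).1 (nd_of_seq hc h3)
      have := htn_lt hq
      omega
    obtain ⟨r, hr, hrq⟩ := this
    refine ⟨r, hrq, fun m => ?_⟩
    obtain ⟨m, rfl⟩ := Submodule.mkQ_surjective _ m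
    rw [← map_smul, h4 r hr, map_zero])
  obtain ⟨n0, hn0⟩ := fc_of_kill (p.asIdeal ⊔ Ideal.span {s}) (fun p' hp' => ih p' (by
      refine lt_of_le_of_ne (le_sup_left.trans hp') ?_
      intro he
      dsimp only at he
      rw [← he] at hp'
      exact hs (hp' (Ideal.mem_sup_right (Ideal.mem_span_singleton_self s)))))
    (QuotSMulTop s (R ⧸ p.asIdeal)) (by
      intro r hr m
      obtain ⟨m, rfl⟩ := Submodule.mkQ_surjective _ m
      rw [← map_smul]
      obtain ⟨a, ha, b, hb, rfl⟩ := Submodule.mem_sup.1 hr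
      obtain ⟨c, rfl⟩ := Ideal.mem_span_singleton'.1 hb
      rw [add_smul, quot_kill ha, zero_add, mul_comm, mul_smul]
      simp only [Submodule.mkQ_apply, Submodule.Quotient.mk_eq_zero]
      exact ⟨c • m, trivial, rfl⟩)
  refine ⟨max (htn p) n0, fun q => ?_⟩
  by_cases hpq : p ≤ q
  · by_cases hsq : s ∈ q.asIdeal
    · have := nd_diag (fun _ : Fin 1 => s) (fun _ => hsq) (fun _ => LinearMap.id) (by simp)
        (smul_ses (reg_quot hs)) (hn0 q)
      exact nd_le (by omega) this
    · have : ∀ n, n ≤ htn q - htn p → ND q n (R ⧸ p.asIdeal) := by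
        intro n
        induction n with
        | zero => intro _; exact nd_zero
        | succ n ihn =>
          intro hn
          exact nd_left hses (nd_le (by omega) (h6 q hpq)) (hs' q hpq hsq n (ihn (by omega)))
      exact this _ (by omega)
  · obtain ⟨r, hr, hr'⟩ := SetLike.not_le_iff_exists.1 (show ¬ p.asIdeal ≤ q.asIdeal from hpq)
    exact nd_of_kill hr' (quot_kill hr) _

lemma fc_all (hCM : ∀ p : PrimeSpectrum R, IsCMLocalRing (Localization.AtPrime p.asIdeal))
    (M : Type u) [AddCommGroup M] [Module R M] [hM : Module.Finite R M] : FC (R := R) M :=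
  fc_of_kill ⊥ (fun p _ => fc_prime hCM p) M (by
    intro r hr m
    rw [Ideal.mem_bot.1 hr, zero_smul])

end PartF

section PartG

set_option linter.unusedSectionVars false

variable {R : Type u} [CommRing R] [IsNoetherianRing R]
variable {A B C M N X Y : Type u}
  [AddCommGroup A] [Module R A] [AddCommGroup B] [Module R B] [AddCommGroup C] [Module R C]
  [AddCommGroup M] [Module R M] [AddCommGroup N] [Module R N]
  [AddCommGroup X] [Module R X] [AddCommGroup Y] [Module R Y]

open RingTheory.Sequence
open scoped Pointwise


lemma exists_min_cover (S : Type u) [CommRing S] [IsLocalRing S] (M : Type u) [AddCommGroup M]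
    [Module S M] [hM : Module.Finite S M] : ∃ (n : ℕ) (g : (Fin n → S) →ₗ[S] M),
    Function.Surjective g ∧
      LinearMap.ker g ≤ (IsLocalRing.maximalIdeal S) • (⊤ : Submodule S (Fin n → S)) := by
  classical
  have hex : ∃ n, ∃ t : Fin n → M, Submodule.span S (Set.range t) = ⊤ := by
    obtain ⟨n, g, hg⟩ := Module.Finite.exists_fin (R := S) (M := M)
    exact ⟨n, g, hg⟩
  obtain ⟨t, ht⟩ := Nat.find_spec hex
  have hmin := fun m (h : m < Nat.find hex) => Nat.find_min hex h
  generalize Nat.find hex = n at t ht hmin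
  refine ⟨n, Fintype.linearCombination S t, ?_, ?_⟩
  · rw [← LinearMap.range_eq_top, Fintype.range_linearCombination, ht]
  · intro v hv
    by_cases hall : ∀ i, v i ∈ IsLocalRing.maximalIdeal S
    · rw [pi_eq_sum_univ' v]
      exact Submodule.sum_mem _ fun i _ => Submodule.smul_mem_smul (hall i) trivial
    · exfalso
      push Not at hall
      obtain ⟨i, hi⟩ := hall
      cases n with
      | zero => exact i.elim0
      | succ k =>
        refine hmin k (Nat.lt_succ_self k) ⟨t ∘ i.succAbove, ?_⟩
        rw [eq_top_iff, ← ht, Submodule.span_le]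
        have hmem : ∀ j, t (i.succAbove j) ∈ Submodule.span S (Set.range (t ∘ i.succAbove)) :=
          fun j => Submodule.subset_span ⟨j, rfl⟩
        rintro _ ⟨j, rfl⟩
        rcases Fin.eq_self_or_eq_succAbove i j with rfl | ⟨j, rfl⟩
        · have h1 : ∑ l, v l • t l = 0 := by
            rw [LinearMap.mem_ker, Fintype.linearCombination_apply] at hv
            exact hv
          rw [Fin.sum_univ_succAbove _ j] at h1
          obtain ⟨w, hw⟩ : IsUnit (v j) := by
            rw [IsLocalRing.mem_maximalIdeal, mem_nonunits_iff, not_not] at hi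
            exact hi
          have h2 : t j = -((↑w⁻¹ : S) • ∑ l, v (j.succAbove l) • t (j.succAbove l)) := by
            rw [eq_neg_of_add_eq_zero_right h1, smul_neg, neg_neg, ← hw, smul_smul, Units.inv_mul, one_smul]
          rw [SetLike.mem_coe, h2]
          exact neg_mem (Submodule.smul_mem _ _ (Submodule.sum_mem _ fun l _ =>
            Submodule.smul_mem _ _ (hmem l)))
        · exact hmem j

lemma exists_minSyz (S : Type u) [CommRing S] [IsLocalRing S] [IsNoetherianRing S] (n : ℕ) :
    ∀ (M : ModuleCat.{u} S), Module.Finite S M → ∃ K, IsMinSyz S n M K := by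
  induction n with
  | zero => intro M _; exact ⟨M, ⟨LinearEquiv.refl S M⟩⟩
  | succ n ih =>
    intro M hM
    obtain ⟨m, g, hg, hk⟩ := exists_min_cover S M
    obtain ⟨K, hK⟩ := ih (ModuleCat.of S (LinearMap.ker g)) (inferInstanceAs (Module.Finite S (LinearMap.ker g)))
    exact ⟨K, ModuleCat.of S (Fin m → S), g, ModuleCat.of S (LinearMap.ker g),
      (LinearMap.ker g).subtype, inferInstanceAs (Module.Finite S (Fin m → S)),
      inferInstanceAs (Module.Free S (Fin m → S)), hg, hk, Subtype.val_injective,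
      Submodule.range_subtype _, hK⟩

lemma omn_of_cod (hCM : ∀ p : PrimeSpectrum R, IsCMLocalRing (Localization.AtPrime p.asIdeal))
    (f : PrimeSpectrum R → ℕ) (n : ℕ) : ∀ (M : Type u) [AddCommGroup M] [Module R M]
    [Module.Finite R M], (∀ q : PrimeSpectrum R, Cod q n M) → Mem (omn n (psiDepth R f)) M := by
  induction n with
  | zero =>
    intro M _ _ _ h
    exact (psi_iff f (ModuleCat.of R M)).2 ⟨inferInstanceAs (Module.Finite R M), fun p => nd_le (by omega) (h p)⟩
  | succ n ih =>
    intro M _ _ _ h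
    obtain ⟨P, g, hP1, hP2, hg⟩ := exists_cover (S := R) M
    have hs := ses_ker hg
    rw [omn_succ']
    refine om_mk (omn_resolving (psi_resolving hCM f) n) hs (ih _ fun q => ?_)
    exact nd_syz hs (nd_le (by omega) (nd_proj hCM q)) (nd_le (by omega) (h q))

lemma omn_loc {W : Set (ModuleCat.{u} R)} (hW : IsResolving R W) (p : PrimeSpectrum R) (n : ℕ) :
    ∀ (M : Type u) [AddCommGroup M] [Module R M], Mem (omn n W) M → Mem (omn n (Wp W p)) (Lp p M) := by
  induction n with
  | zero => intro M _ _ h; exact wp_loc p h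
  | succ n ih =>
    intro M _ _ h
    have := mem_fin (omn_resolving hW (n+1)) h
    obtain ⟨P, g, hP1, hP2, hg⟩ := exists_cover (S := R) M
    have hs := ses_ker hg
    rw [omn_succ'] at h ⊢
    have hK := om_all (omn_resolving hW n) hs h
    have : Module.Projective (Rp p) (Lp p P) :=
      Module.projective_of_isLocalizedModule p.asIdeal.primeCompl (LocalizedModule.mkLinearMap p.asIdeal.primeCompl P)
    exact om_mk (omn_resolving (wp_resolving hW p) n) (loc_ses p hs) (ih _ hK)

lemma psi_dominant (hCM : ∀ p : PrimeSpectrum R, IsCMLocalRing (Localization.AtPrime p.asIdeal))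
    (f : PrimeSpectrum R → ℕ) : Dominant R (psiDepth R f) := by
  intro p _
  have hfk := fin_k (S := Rp p)
  have hW := psi_resolving hCM f
  obtain ⟨N0, h1, h2⟩ := exists_sub p (IsLocalRing.ResidueField (Rp p))
  obtain ⟨e⟩ := equiv_sub N0 h2
  have hN0 : Module.Finite R N0 := Module.Finite.iff_fg.2 h1
  obtain ⟨n, hn⟩ := fc_all hCM N0
  have h3 := omn_loc hW p n _ (omn_of_cod hCM f n _ hn)
  have hWp := wp_resolving hW p
  have h4 := mem_iso (omn_resolving hWp n) e h3
  obtain ⟨K, hK⟩ := exists_minSyz (Rp p) n (ModuleCat.of (Rp p) (IsLocalRing.ResidueField (Rp p))) hfk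
  exact ⟨n, K, hK, memAdd_of_wp ((minSyz_om hWp n _ K hK).2 h4)⟩

lemma nd_fac {q : PrimeSpectrum R} {s : R} (hs : s ∉ q.asIdeal) (b : M →ₗ[R] X) (a : X →ₗ[R] M)
    (h : ∀ m, a (b m) = s • m) [Module.Finite R M] [Module.Finite R X] {n : ℕ} (hX : ND q n X) :
    ND q n M := by
  obtain ⟨u, hu⟩ := alg_unit hs
  refine dg_retract (Lmap q b) ((↑u⁻¹ : Rp q) • Lmap q a) (fun m => ?_) hX
  have : Lmap q a (Lmap q b m) = algebraMap R (Rp q) s • m := by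
    induction m using LocalizedModule.induction_on with
    | h m t => rw [Lmap_mk, Lmap_mk, h, algebraMap_smul, LocalizedModule.smul'_mk]
  rw [LinearMap.smul_apply, this, ← hu, smul_smul, Units.inv_mul, one_smul]

lemma exists_T (hCM : ∀ p : PrimeSpectrum R, IsCMLocalRing (Localization.AtPrime p.asIdeal))
    (p : PrimeSpectrum R) (j : ℕ) : j ≤ htn p →
    ∃ (T : Type u) (_ : AddCommGroup T) (_ : Module R T) (_ : Module.Finite R T),
      (∀ q, ¬ p ≤ q → Cod q 0 T) ∧ (∀ q, p ≤ q → Cod q j T) ∧ ¬ ND p (htn p - j + 1) T := by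
  obtain ⟨m, x, hx⟩ := Submodule.fg_iff_exists_fin_generating_family.1 (IsNoetherian.noetherian p.asIdeal)
  have hxp : ∀ i, x i ∈ p.asIdeal := fun i => hx ▸ Submodule.subset_span ⟨i, rfl⟩
  induction j with
  | zero =>
    intro _
    refine ⟨R, inferInstance, inferInstance, inferInstance, fun q _ => ?_, fun q _ => ?_, fun h => ?_⟩
    · exact (nd_R hCM q).2 (by omega)
    · exact (nd_R hCM q).2 (by omega)
    · have := (nd_R hCM p).1 h
      omega
  | succ j ih =>
    intro hj
    obtain ⟨T, i1, i2, i3, h1, h2, h3⟩ := ih (by omega)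
    have hinj : Function.Injective (diagMap x T) := by
      obtain ⟨y, hy, hreg⟩ := exists_reg (M := T) (p := p) (fun q hq => nd_le (by
        have := htn_le hq; omega) (h2 q hq))
      rw [← hx, Submodule.mem_span_range_iff_exists_fun] at hy
      obtain ⟨c, rfl⟩ := hy
      rw [injective_iff_map_eq_zero]
      intro t ht
      rw [isSMulRegular_iff_right_eq_zero_of_smul] at hreg
      apply hreg
      rw [Finset.sum_smul]
      refine Finset.sum_eq_zero fun i _ => ?_
      have h4 : x i • t = 0 := congrFun ht i
      rw [smul_assoc, h4, smul_zero]
    have hses : IsSES (diagMap x T) (LinearMap.range (diagMap x T)).mkQ :=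
      ⟨hinj, Submodule.mkQ_surjective _, by rw [Submodule.ker_mkQ]⟩
    refine ⟨(Fin m → T) ⧸ LinearMap.range (diagMap x T), inferInstance, inferInstance, inferInstance, ?_, ?_, ?_⟩
    · intro q hq
      obtain ⟨i, hi⟩ : ∃ i, x i ∉ q.asIdeal := by
        by_contra hc
        push Not at hc
        apply hq
        change p.asIdeal ≤ q.asIdeal
        rw [← hx, Submodule.span_le]
        rintro _ ⟨i, rfl⟩
        exact hc i
      let b : (Fin m → T) →ₗ[R] (Fin m → T) := x i • LinearMap.id - diagMap x T ∘ₗ LinearMap.proj i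
      have hb : LinearMap.range (diagMap x T) ≤ LinearMap.ker b := by
        rintro _ ⟨t, rfl⟩
        rw [LinearMap.mem_ker]
        funext k
        change x i • (x k • t) - x k • (x i • t) = 0
        rw [smul_comm, sub_self]
      refine nd_fac hi ((LinearMap.range (diagMap x T)).liftQ b hb) (LinearMap.range (diagMap x T)).mkQ
        (fun v => ?_) (nd_pi (h1 q hq) m)
      obtain ⟨v, rfl⟩ := Submodule.mkQ_surjective _ v
      rw [← map_smul]
      have : (LinearMap.range (diagMap x T)).liftQ b hb ((LinearMap.range (diagMap x T)).mkQ v) = b v := rfl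
      rw [this, ← sub_eq_zero, ← map_sub]
      change Submodule.Quotient.mk _ = 0
      rw [Submodule.Quotient.mk_eq_zero]
      refine ⟨-(v i), ?_⟩
      change _ = (x i • v - diagMap x T (v i)) - x i • v
      rw [map_neg]; abel
    · intro q hq
      have := htn_le hq
      exact nd_right hses (nd_pi (nd_le (by omega) (h2 q hq)) m) (nd_le (by omega) (h2 q hq))
    · intro h
      refine h3 (nd_le (by omega) (nd_diag x hxp _ (diagMap_eq x) hses h))

theorem dir2 (hCM : ∀ p : PrimeSpectrum R, IsCMLocalRing (Localization.AtPrime p.asIdeal))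
    (f : PrimeSpectrum R → ℕ) (hf : GradeConsistent R f) :
      IsResolving R (psiDepth R f) ∧ Dominant R (psiDepth R f) ∧
      (∀ p : PrimeSpectrum R,
        (f p : ℕ∞) = heightE R p - ⨅ X ∈ psiDepth R f, localDepth R p X) := by
  have hW := psi_resolving hCM f
  refine ⟨hW, psi_dominant hCM f, fun p => ?_⟩
  obtain ⟨d, h1, h2, ⟨X, hX, h3, h4⟩, h5⟩ := exists_d hCM hW p
  have hfp := (grade_eq hCM p (f p)).1 (hf.1 p)
  obtain ⟨T, i1, i2, i3, h6, h7, h8⟩ := exists_T hCM p (f p) hfp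
  have hT : ModuleCat.of R T ∈ psiDepth R f := by
    refine (psi_iff f _).2 ⟨i3, fun q => ?_⟩
    by_cases hq : p ≤ q
    · have := hf.2 p q hq
      exact nd_le (by omega) (h7 q hq)
    · exact nd_le (by omega) (h6 q hq)
  have h9 := h5 _ hT
  have h10 : d ≤ htn p - f p := by
    by_contra hlt
    exact h8 (nd_le (by omega) h9)
  have h11 : htn p - f p ≤ d := by
    by_contra hlt
    exact h4 (nd_le (by omega) (((psi_iff f X).1 hX).2 p))
  rw [h1, ← htn_coe, ← ENat.natCast_sub]
  congr 1
  omega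

end PartG

/-- Theorem 1.3: over a Cohen-Macaulay ring, `φ` and `ψ` are mutually inverse bijections
between the dominant resolving subcategories of `mod R` and the grade consistent
functions on `Spec R`. -/
theorem dominant_resolving_classification [IsNoetherianRing R]
    (hCM : ∀ p : PrimeSpectrum R, IsCMLocalRing (Localization.AtPrime p.asIdeal)) :
    (∀ 𝒳 : Set (ModuleCat.{u} R), IsResolving R 𝒳 → Dominant R 𝒳 →
      ∃ f : PrimeSpectrum R → ℕ, GradeConsistent R f ∧
        (∀ p : PrimeSpectrum R,
          (f p : ℕ∞) = heightE R p - ⨅ X ∈ 𝒳, localDepth R p X) ∧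
        psiDepth R f = 𝒳) ∧
    (∀ f : PrimeSpectrum R → ℕ, GradeConsistent R f →
      IsResolving R (psiDepth R f) ∧ Dominant R (psiDepth R f) ∧
      (∀ p : PrimeSpectrum R,
        (f p : ℕ∞) = heightE R p - ⨅ X ∈ psiDepth R f, localDepth R p X)) := by
  exact ⟨fun W h1 h2 => dir1 hCM W h1 h2, fun f hf => dir2 hCM f hf⟩

end ResolvPaper
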